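/- arXiv:1304.4702 — 5 statements merged into one kernel-verified Lean document; each statement's English description precedes it below -/
import Mathlib

section
/- Let f : ℝ → ℝ be C^∞ on a neighborhood of a point α with f(α) = 0 and f′(α) ≠ 0, and set c₂ = f″(α)/(2 f′(α)), c₃ = f‴(α)/(6 f′(α)). Define the Newton iterate y(x) = x − f(x)/f′(x). Then, as x → α, f(y(x)) = f′(α)·[c₂(x−α)² + 2(−c₂² + c₃)(x−α)³ + O((x−α)⁴)]. -/
open Filter Topology Asymptotics

/-- The Newton iterate `y(x) = x − f(x)/f′(x)`. -/
noncomputable def newtonStep (f : ℝ → ℝ) (x : ℝ) : ℝ := x - f x / deriv f x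

/-!
Write `h = x - α`, `D = f′(α)` and `M = c₂ h² + 2 (c₃ - c₂²) h³`. Multiplying out the Taylor
expansions of `f` to order three and of `f′` to order two shows `f′(x) (h - M) - f(x) = O(h⁴)`;
dividing by `f′(x)`, which tends to `D ≠ 0`, gives `y(x) - α = M + O(h⁴)`. Since `y(x) - α = O(h²)`,
replacing `f` by its linear part at `y(x)` costs only `O(h⁴)`, so `f(y(x)) = D M + O(h⁴)`.
-/

section Taylor

open scoped Nat

variable {𝕜 E : Type*} [RCLike 𝕜] [NormedAddCommGroup E] [NormedSpace 𝕜 E] {a : 𝕜} {n : ℕ}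

theorem isBigO_sub_pow_succ_of_hasDerivAt {g g' : 𝕜 → E}
    (hg : ∀ᶠ x in 𝓝 a, HasDerivAt g (g' x) x) (hg' : g' =O[𝓝 a] fun x => (x - a) ^ n) :
    (fun x => g x - g a) =O[𝓝 a] fun x => (x - a) ^ (n + 1) := by
  obtain ⟨C, hC, hbound⟩ := hg'.exists_pos
  obtain ⟨ε, hε, hball⟩ := Metric.eventually_nhds_iff_ball.1 (hg.and hbound.bound)
  refine .of_bound C ?_
  filter_upwards [Metric.ball_mem_nhds a hε] with x hx
  have hsub : Metric.closedBall a ‖x - a‖ ⊆ Metric.ball a ε :=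
    Metric.closedBall_subset_ball (mem_ball_iff_norm.1 hx)
  have hderiv : ∀ z ∈ Metric.closedBall a ‖x - a‖, ‖g' z‖ ≤ C * ‖x - a‖ ^ n := fun z hz =>
    calc ‖g' z‖ ≤ C * ‖(z - a) ^ n‖ := (hball z (hsub hz)).2
      _ = C * ‖z - a‖ ^ n := by rw [norm_pow]
      _ ≤ C * ‖x - a‖ ^ n := by gcongr; exact mem_closedBall_iff_norm.1 hz
  have hconvex : Convex ℝ (Metric.closedBall a ‖x - a‖) := convex_closedBall _ _
  calc ‖g x - g a‖ ≤ C * ‖x - a‖ ^ n * ‖x - a‖ :=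
        hconvex.norm_image_sub_le_of_norm_hasDerivWithin_le
          (fun z hz => (hball z (hsub hz)).1.hasDerivWithinAt) hderiv
          (Metric.mem_closedBall_self (norm_nonneg _)) (mem_closedBall_iff_norm.2 le_rfl)
    _ = C * ‖(x - a) ^ (n + 1)‖ := by rw [norm_pow, pow_succ, mul_assoc]

theorem hasDerivAt_sum_pow_div_factorial_smul (c : ℕ → E) (a x : 𝕜) (n : ℕ) :
    HasDerivAt (fun z => ∑ k ∈ Finset.range (n + 1), ((z - a) ^ k / k !) • c k)
      (∑ k ∈ Finset.range n, ((x - a) ^ k / k !) • c (k + 1)) x := by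
  have hterm (k : ℕ) :
      HasDerivAt (fun z : 𝕜 => (z - a) ^ (k + 1) / (k + 1)!) ((x - a) ^ k / k !) x := by
    have hk : ((k ! : ℕ) : 𝕜) ≠ 0 := mod_cast k.factorial_ne_zero
    have hk' : (k : 𝕜) + 1 ≠ 0 := mod_cast k.succ_ne_zero
    convert! (((hasDerivAt_id x).sub_const a).pow (k + 1)).div_const ((k + 1)! : 𝕜) using 1
    rw [Nat.factorial_succ]
    push_cast
    simp only [id]
    field_simp
  simp only [Finset.sum_range_succ']
  simpa using
    (HasDerivAt.fun_sum fun k _ => (hterm k).smul_const (c (k + 1))).add_const (c 0)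

theorem taylor_isBigO {f : 𝕜 → E} (hf : ContDiffAt 𝕜 n f a) :
    (fun x => f x - ∑ k ∈ Finset.range n, ((x - a) ^ k / k !) • iteratedDeriv k f a)
      =O[𝓝 a] fun x => (x - a) ^ n := by
  induction n generalizing f with
  | zero => simpa using hf.continuousAt.isBigO_one 𝕜
  | succ n ih =>
    have hderiv : ∀ᶠ x in 𝓝 a, HasDerivAt
        (fun x => f x - ∑ k ∈ Finset.range (n + 1), ((x - a) ^ k / k !) • iteratedDeriv k f a)
        (deriv f x - ∑ k ∈ Finset.range n, ((x - a) ^ k / k !) • iteratedDeriv k (deriv f) a)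
        x := by
      filter_upwards [hf.eventually (by simp)] with x hx
      simp only [← iteratedDeriv_succ']
      exact (hx.differentiableAt (by simp)).hasDerivAt.sub
        (hasDerivAt_sum_pow_div_factorial_smul _ a x n)
    have hvanish :
        f a - ∑ k ∈ Finset.range (n + 1), ((a - a) ^ k / k !) • iteratedDeriv k f a = 0 := by
      simp [Finset.sum_range_succ']
    simpa only [hvanish, sub_zero] using
      isBigO_sub_pow_succ_of_hasDerivAt hderiv (ih (hf.derivWithin (by simp)))

end Taylor

section NormedField

variable {𝕜 : Type*} [NormedField 𝕜] {α : 𝕜}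

theorem isBigO_mul_sub_pow {q : 𝕜 → 𝕜} (hq : ContinuousAt q α) (n : ℕ) :
    (fun x => q x * (x - α) ^ n) =O[𝓝 α] fun x => (x - α) ^ n := by
  simpa only [one_mul] using (hq.isBigO_one 𝕜).mul (isBigO_refl (fun x => (x - α) ^ n) (𝓝 α))

theorem isBigO_sub_pow_of_le {m n : ℕ} (hmn : m ≤ n) :
    (fun x => (x - α) ^ n) =O[𝓝 α] fun x => (x - α) ^ m := by
  have hq : ContinuousAt (fun x : 𝕜 => (x - α) ^ (n - m)) α := by fun_prop
  simpa only [pow_sub_mul_pow _ hmn] using isBigO_mul_sub_pow hq m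

theorem tendsto_sub_pow {n : ℕ} (hn : n ≠ 0) : Tendsto (fun x => (x - α) ^ n) (𝓝 α) (𝓝 0) := by
  have hcont : ContinuousAt (fun x : 𝕜 => (x - α) ^ n) α := by fun_prop
  simpa [hn] using hcont.tendsto

theorem isBigO_comp_pow {ι E : Type*} [Norm E] {l : Filter ι} {F : 𝕜 → E} {y r : ι → 𝕜} {m : ℕ}
    (hF : F =O[𝓝 α] fun z => (z - α) ^ m) (hy : (fun i => y i - α) =O[l] r)
    (hr : Tendsto r l (𝓝 0)) : (fun i => F (y i)) =O[l] fun i => r i ^ m :=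
  (hF.comp_tendsto (tendsto_sub_nhds_zero_iff.1 (hy.trans_tendsto hr))).trans (hy.pow m)

variable {f f' : 𝕜 → 𝕜} {D c₂ c₃ : 𝕜}

theorem newton_error_isBigO (hD : D ≠ 0)
    (hf : (fun x => f x - D * ((x - α) + c₂ * (x - α) ^ 2 + c₃ * (x - α) ^ 3))
      =O[𝓝 α] fun x => (x - α) ^ 4)
    (hf' : (fun x => f' x - D * (1 + 2 * c₂ * (x - α) + 3 * c₃ * (x - α) ^ 2))
      =O[𝓝 α] fun x => (x - α) ^ 3) :
    (fun x => x - f x / f' x - α - (c₂ * (x - α) ^ 2 + 2 * (-c₂ ^ 2 + c₃) * (x - α) ^ 3))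
      =O[𝓝 α] fun x => (x - α) ^ 4 := by
  set M : 𝕜 → 𝕜 := fun x => c₂ * (x - α) ^ 2 + 2 * (-c₂ ^ 2 + c₃) * (x - α) ^ 3 with hM
  have hlim : Tendsto f' (𝓝 α) (𝓝 D) := by
    have hpoly : ContinuousAt
        (fun x => D * (1 + 2 * c₂ * (x - α) + 3 * c₃ * (x - α) ^ 2)) α := by fun_prop
    simpa using (hf'.trans_tendsto (tendsto_sub_pow three_ne_zero)).add hpoly.tendsto
  have hinv : (fun x => (f' x)⁻¹) =O[𝓝 α] fun _ => (1 : 𝕜) := (hlim.inv₀ hD).isBigO_one 𝕜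
  have hstep : (fun x => x - α - M x) =O[𝓝 α] fun x => (x - α) ^ 1 := by
    have hq : ContinuousAt
        (fun x => 1 - c₂ * (x - α) - 2 * (-c₂ ^ 2 + c₃) * (x - α) ^ 2) α := by fun_prop
    refine (isBigO_mul_sub_pow hq 1).congr_left fun x => ?_
    simp only [hM]
    ring
  have hpoly : (fun x => D * (1 + 2 * c₂ * (x - α) + 3 * c₃ * (x - α) ^ 2) * (x - α - M x)
      - D * ((x - α) + c₂ * (x - α) ^ 2 + c₃ * (x - α) ^ 3)) =O[𝓝 α] fun x => (x - α) ^ 4 := by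
    have hq : ContinuousAt (fun x => -D * (3 * c₂ * c₃ + 4 * c₂ * (-c₂ ^ 2 + c₃)
        + 6 * c₃ * (-c₂ ^ 2 + c₃) * (x - α))) α := by fun_prop
    refine (isBigO_mul_sub_pow hq 4).congr_left fun x => ?_
    simp only [hM]
    ring
  have hnum : (fun x => f' x * (x - α - M x) - f x) =O[𝓝 α] fun x => (x - α) ^ 4 := by
    have hf'step := (hf'.mul hstep).congr_right (g₂ := fun x => (x - α) ^ 4) fun x => by ring
    exact ((hf'step.add hpoly).sub hf).congr_left fun x => by ring
  refine (hinv.mul hnum).congr' ?_ (.of_forall fun x => one_mul _)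
  filter_upwards [hlim.eventually_ne hD] with x hx
  field_simp
  ring

theorem newton_residual_isBigO (hD : D ≠ 0)
    (hf : (fun x => f x - D * ((x - α) + c₂ * (x - α) ^ 2 + c₃ * (x - α) ^ 3))
      =O[𝓝 α] fun x => (x - α) ^ 4)
    (hf' : (fun x => f' x - D * (1 + 2 * c₂ * (x - α) + 3 * c₃ * (x - α) ^ 2))
      =O[𝓝 α] fun x => (x - α) ^ 3) :
    (fun x => f (x - f x / f' x) - D * (c₂ * (x - α) ^ 2 + 2 * (-c₂ ^ 2 + c₃) * (x - α) ^ 3))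
      =O[𝓝 α] fun x => (x - α) ^ 4 := by
  have herror := newton_error_isBigO hD hf hf'
  have hquadratic : (fun x => x - f x / f' x - α) =O[𝓝 α] fun x => (x - α) ^ 2 := by
    have hq : ContinuousAt (fun x => c₂ + 2 * (-c₂ ^ 2 + c₃) * (x - α)) α := by fun_prop
    exact ((herror.trans (isBigO_sub_pow_of_le (by norm_num))).add
      (isBigO_mul_sub_pow hq 2)).congr_left fun x => by ring
  have hlinear : (fun z => f z - D * (z - α)) =O[𝓝 α] fun z => (z - α) ^ 2 := by
    have hq : ContinuousAt (fun z => D * (c₂ + c₃ * (z - α))) α := by fun_prop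
    exact ((hf.trans (isBigO_sub_pow_of_le (by norm_num))).add
      (isBigO_mul_sub_pow hq 2)).congr_left fun z => by ring
  have hlinear_at_step := isBigO_comp_pow hlinear hquadratic (tendsto_sub_pow two_ne_zero)
  simp only [← pow_mul] at hlinear_at_step
  exact (hlinear_at_step.add (herror.const_mul_left D)).congr_left fun x => by ring

end NormedField

theorem f_at_newton_iterate_expansion_general {𝕜 : Type*} [RCLike 𝕜] {f : 𝕜 → 𝕜} {α : 𝕜}
    (hf : ContDiffAt 𝕜 4 f α) (hroot : f α = 0) (hsimple : deriv f α ≠ 0) {c₂ c₃ : 𝕜}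
    (hc₂ : c₂ = iteratedDeriv 2 f α / (2 * deriv f α))
    (hc₃ : c₃ = iteratedDeriv 3 f α / (6 * deriv f α)) :
    (fun x => f (x - f x / deriv f x) -
        deriv f α * (c₂ * (x - α) ^ 2 + 2 * (-c₂ ^ 2 + c₃) * (x - α) ^ 3))
      =O[𝓝 α] fun x => (x - α) ^ 4 := by
  have hderiv : ContDiffAt 𝕜 3 (deriv f) α := hf.derivWithin (by norm_num)
  refine newton_residual_isBigO hsimple ((taylor_isBigO (n := 4) hf).congr_left fun x => ?_)
    ((taylor_isBigO (n := 3) hderiv).congr_left fun x => ?_)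
  all_goals
    simp only [Finset.sum_range_succ, Finset.sum_range_zero, ← iteratedDeriv_succ',
      zero_add, Nat.reduceAdd, iteratedDeriv_zero, iteratedDeriv_one, hroot, hc₂, hc₃,
      Nat.factorial, smul_eq_mul]
    push_cast
    field_simp
    ring

theorem f_at_newton_iterate_expansion (f : ℝ → ℝ) (α : ℝ)
    (hf : ∃ s ∈ 𝓝 α, ContDiffOn ℝ (⊤ : ℕ∞) f s)
    (hroot : f α = 0) (hsimple : deriv f α ≠ 0)
    (c₂ c₃ : ℝ)
    (hc₂ : c₂ = iteratedDeriv 2 f α / (2 * deriv f α))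
    (hc₃ : c₃ = iteratedDeriv 3 f α / (6 * deriv f α)) :
    (fun x => f (newtonStep f x) -
        deriv f α * (c₂ * (x - α) ^ 2 + 2 * (-c₂ ^ 2 + c₃) * (x - α) ^ 3))
      =O[𝓝[≠] α] fun x => (x - α) ^ 4 := by
  obtain ⟨s, hs, hfs⟩ := hf
  have hf4 : ContDiffAt ℝ 4 f α := contDiffAt_infty.1 (hfs.contDiffAt hs) 4
  exact (f_at_newton_iterate_expansion_general hf4 hroot hsimple hc₂ hc₃).mono nhdsWithin_le_nhds
end

section
/- Let f : ℝ → ℝ be C^∞ on a neighborhood of a point α with f(α) = 0 and f′(α) ≠ 0, and set c₂ = f″(α)/(2 f′(α)), c₃ = f‴(α)/(6 f′(α)), c₄ = f⁗(α)/(24 f′(α)). Define y(x) = x − f(x)/f′(x) and the second step z(x) = y(x) − ((2f(x) − f(y(x)))/(2f(x) − 5f(y(x))))·(f(y(x))/f′(x)). Then, as x → α, z(x) − α = −c₂c₃(x−α)⁴ + O((x−α)⁵); in particular this two-step scheme (Kung's family with β = −1/2) has local order of convergence four. -/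
open Filter Topology Asymptotics

/-- The second step of Kung's fourth-order family with `β = −1/2`:
`z(x) = y − ((2f(x) − f(y))/(2f(x) − 5f(y)))·(f(y)/f′(x))` where `y = newtonStep f x`. -/
noncomputable def kungStep (f : ℝ → ℝ) (x : ℝ) : ℝ :=
  newtonStep f x -
    ((2 * f x - f (newtonStep f x)) / (2 * f x - 5 * f (newtonStep f x))) *
      (f (newtonStep f x) / deriv f x)

/-!
Write `e = x − α`, `g = dslope f α` and `y = newtonStep f x`, so that `f x = e * g x` and
`y − α = e * (1 − g x / f′ x)`. Factoring `f y = (y − α) * g y` in the same way, a step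
`y − H (f y / f x) * (f y / f′ x)` has error

  `e * (1 − g x / f′ x) * (1 − H (f y / f x) * (g y / f′ x))`,

in which no factor is singular at `α`, so it suffices to compute modulo `e³`. The second factor is
`c₂ e + O(e²)`; when `H t = 1 + 2t + ηt² + O(t³)`, the last one loses its constant and linear terms
and equals `((5 − η) c₂² − c₃) e² + O(e³)`. The weight `(2 − t) / (2 − 5t)` has `η = 5`.
-/

theorem taylor_isBigO_of_contDiffAt {E : Type*} [NormedAddCommGroup E] [NormedSpace ℝ E]
    {f : ℝ → E} {α : ℝ} {n : ℕ} (hf : ContDiffAt ℝ n f α) :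
    (fun x => f x - ∑ k ∈ Finset.range n,
      ((k.factorial : ℝ)⁻¹ * (x - α) ^ k) • iteratedDeriv k f α)
      =O[𝓝 α] fun x => (x - α) ^ n := by
  obtain ⟨u, hu, hfu⟩ := hf.contDiffOn le_rfl (by simp)
  obtain ⟨ε, hε, hball⟩ := Metric.mem_nhds_iff.1 (show u ∈ 𝓝 α by simpa using hu)
  have htaylor := taylor_isLittleO (convex_ball α ε) (Metric.mem_ball_self hε) (hfu.mono hball)
  rw [nhdsWithin_eq_nhds.2 (Metric.ball_mem_nhds α hε)] at htaylor
  have hlast : (fun x => ((n.factorial : ℝ)⁻¹ * (x - α) ^ n) • iteratedDeriv n f α)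
      =O[𝓝 α] fun x => (x - α) ^ n := by
    simpa using ((isBigO_refl (fun x => (x - α) ^ n) (𝓝 α)).const_mul_left _).smul
      (isBigO_const_const (iteratedDeriv n f α) (one_ne_zero (α := ℝ)) _)
  refine (htaylor.isBigO.add hlast).congr_left fun x => ?_
  have hcoeff : ∀ k ∈ Finset.range (n + 1),
      iteratedDerivWithin k f (Metric.ball α ε) α = iteratedDeriv k f α := fun k hk =>
    iteratedDerivWithin_eq_iteratedDeriv Metric.isOpen_ball.uniqueDiffOn
      (hf.of_le (by exact_mod_cast Finset.mem_range_succ_iff.1 hk)) (Metric.mem_ball_self hε)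
  rw [taylor_within_apply, Finset.sum_congr rfl fun k hk => by rw [hcoeff k hk],
    Finset.sum_range_succ]
  abel

theorem dslope_sub_isBigO_pow {𝕜 E : Type*} [NontriviallyNormedField 𝕜] [NormedAddCommGroup E]
    [NormedSpace 𝕜 E] {f P : 𝕜 → E} {α : 𝕜} {n : ℕ} (hP : P α = deriv f α)
    (hf : (fun x => f x - f α - (x - α) • P x) =O[𝓝 α] fun x => (x - α) ^ (n + 1)) :
    (fun x => dslope f α x - P x) =O[𝓝 α] fun x => (x - α) ^ n := by
  rw [← nhdsNE_sup_pure]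
  refine IsBigO.sup ?_ (isBigO_pure.2 fun _ => by simp [hP])
  refine ((isBigO_refl (fun x => (x - α)⁻¹) _).smul (hf.mono nhdsWithin_le_nhds)).congr' ?_ ?_
  · filter_upwards [self_mem_nhdsWithin] with x hx
    rw [← sub_smul_dslope, ← smul_sub, inv_smul_smul₀ (sub_ne_zero.2 hx)]
  · filter_upwards [self_mem_nhdsWithin] with x hx
    rw [smul_eq_mul, pow_succ', inv_mul_cancel_left₀ (sub_ne_zero.2 hx)]

/-- The second-order jet of `φ` at `α`, with a remainder of Taylor type:
`φ(x) = a + b (x − α) + c (x − α)² + O((x − α)³)` as `x → α`. Since the neighbourhood is not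
punctured, this includes `φ α = a`. -/
def HasQuadraticExpansion {𝕜 : Type*} [NormedField 𝕜] (φ : 𝕜 → 𝕜) (α a b c : 𝕜) : Prop :=
  (fun x => φ x - (a + b * (x - α) + c * (x - α) ^ 2)) =O[𝓝 α] fun x => (x - α) ^ 3

namespace HasQuadraticExpansion

section NormedField

variable {𝕜 : Type*} [NormedField 𝕜] {φ ψ : 𝕜 → 𝕜} {α β a b c a' b' c' p q r : 𝕜}

theorem quadratic (α a b c : 𝕜) :
    HasQuadraticExpansion (fun x => a + b * (x - α) + c * (x - α) ^ 2) α a b c := by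
  simpa [HasQuadraticExpansion] using isBigO_zero _ _

theorem const (α a : 𝕜) : HasQuadraticExpansion (fun _ => a) α a 0 0 := by
  simpa using quadratic α a 0 0

theorem id (α : 𝕜) : HasQuadraticExpansion (fun x => x) α α 1 0 := by
  simpa using quadratic α α 1 0

theorem tendsto (hφ : HasQuadraticExpansion φ α a b c) : Tendsto φ (𝓝 α) (𝓝 a) := by
  have hpow : Tendsto (fun x => (x - α) ^ 3) (𝓝 α) (𝓝 0) :=
    Continuous.tendsto' (by fun_prop) _ _ (by simp)
  have hpoly : Tendsto (fun x => a + b * (x - α) + c * (x - α) ^ 2) (𝓝 α) (𝓝 a) :=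
    Continuous.tendsto' (by fun_prop) _ _ (by simp)
  simpa using (hφ.trans_tendsto hpow).add hpoly

theorem sub_linear_isBigO (hφ : HasQuadraticExpansion φ α a b c) :
    (fun x => φ x - (a + b * (x - α))) =O[𝓝 α] fun x => (x - α) ^ 2 := by
  have hcube : (fun x => (x - α) ^ 3) =O[𝓝 α] fun x => (x - α) ^ 2 := by
    simpa only [← norm_pow, isBigO_norm_norm] using
      (isLittleO_pow_sub_pow_sub α (Nat.lt_succ_self 2)).isBigO
  refine ((hφ.trans hcube).add ((isBigO_refl _ _).const_mul_left c)).congr_left fun x => ?_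
  ring

theorem sub_const_isBigO (hφ : HasQuadraticExpansion φ α a b c) :
    (fun x => φ x - a) =O[𝓝 α] fun x => x - α := by
  have hsq : (fun x => (x - α) ^ 2) =O[𝓝 α] fun x => x - α := by
    simpa only [← norm_pow, isBigO_norm_left] using (isLittleO_pow_sub_sub α one_lt_two).isBigO
  refine ((hφ.sub_linear_isBigO.trans hsq).add
    ((isBigO_refl _ _).const_mul_left b)).congr_left fun x => ?_
  ring

theorem add (hφ : HasQuadraticExpansion φ α a b c) (hψ : HasQuadraticExpansion ψ α a' b' c') :
    HasQuadraticExpansion (fun x => φ x + ψ x) α (a + a') (b + b') (c + c') :=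
  (IsBigO.add hφ hψ).congr_left fun x => by ring

theorem sub (hφ : HasQuadraticExpansion φ α a b c) (hψ : HasQuadraticExpansion ψ α a' b' c') :
    HasQuadraticExpansion (fun x => φ x - ψ x) α (a - a') (b - b') (c - c') :=
  (IsBigO.sub hφ hψ).congr_left fun x => by ring

theorem mul (hφ : HasQuadraticExpansion φ α a b c) (hψ : HasQuadraticExpansion ψ α a' b' c') :
    HasQuadraticExpansion (fun x => φ x * ψ x) α
      (a * a') (a * b' + b * a') (a * c' + b * b' + c * a') := by
  have hleft : (fun x => φ x * (ψ x - (a' + b' * (x - α) + c' * (x - α) ^ 2)))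
      =O[𝓝 α] fun x => (x - α) ^ 3 := by
    simpa using (hφ.tendsto.isBigO_one 𝕜).mul hψ
  have hright : (fun x => (φ x - (a + b * (x - α) + c * (x - α) ^ 2)) *
      (a' + b' * (x - α) + c' * (x - α) ^ 2)) =O[𝓝 α] fun x => (x - α) ^ 3 := by
    simpa using IsBigO.mul hφ ((quadratic α a' b' c').tendsto.isBigO_one 𝕜)
  have htail : (fun x => (x - α) ^ 3 * (b * c' + c * b' + c * c' * (x - α)))
      =O[𝓝 α] fun x => (x - α) ^ 3 := by
    have hpoly : Tendsto (fun x => b * c' + c * b' + c * c' * (x - α)) (𝓝 α)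
        (𝓝 (b * c' + c * b')) := Continuous.tendsto' (by fun_prop) _ _ (by simp)
    simpa using (isBigO_refl (fun x => (x - α) ^ 3) _).mul (hpoly.isBigO_one 𝕜)
  exact ((hleft.add hright).add htail).congr_left fun x => by ring

/-- The expansion of `φ` is prescribed as the product of those of `φ / ψ` and `ψ`, so that
computing the coefficients of a quotient takes no division. -/
theorem div
    (hφ : HasQuadraticExpansion φ α (p * a) (p * b + q * a) (p * c + q * b + r * a))
    (hψ : HasQuadraticExpansion ψ α a b c) (ha : a ≠ 0) :
    HasQuadraticExpansion (fun x => φ x / ψ x) α p q r := by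
  have hnum : (fun x => φ x - (p + q * (x - α) + r * (x - α) ^ 2) * ψ x)
      =O[𝓝 α] fun x => (x - α) ^ 3 := by
    simpa [HasQuadraticExpansion] using hφ.sub ((quadratic α p q r).mul hψ)
  have hquot : (fun x => (φ x - (p + q * (x - α) + r * (x - α) ^ 2) * ψ x) * (ψ x)⁻¹)
      =O[𝓝 α] fun x => (x - α) ^ 3 := by
    simpa using hnum.mul ((hψ.tendsto.inv₀ ha).isBigO_one 𝕜)
  refine hquot.congr' ?_ EventuallyEq.rfl
  filter_upwards [hψ.tendsto.eventually_ne ha] with x hx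
  field_simp

theorem comp (hψ : HasQuadraticExpansion ψ β a' b' c') (hφ : HasQuadraticExpansion φ α β b c) :
    HasQuadraticExpansion (fun x => ψ (φ x)) α a' (b' * b) (b' * c + c' * b ^ 2) := by
  have houter : (fun x => ψ (φ x) - (a' + b' * (φ x - β) + c' * (φ x - β) ^ 2))
      =O[𝓝 α] fun x => (x - α) ^ 3 :=
    (hψ.comp_tendsto hφ.tendsto).trans (hφ.sub_const_isBigO.pow 3)
  have hshift : HasQuadraticExpansion (fun x => φ x - β) α 0 b c := by
    simpa using hφ.sub (const α β)
  have hlinear := (const α b').mul hshift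
  have hsquare := (const α c').mul (hshift.mul hshift)
  exact ((houter.add hlinear).add hsquare).congr_left fun x => by ring

end NormedField

variable {f : ℝ → ℝ} {α : ℝ}

theorem of_contDiffAt (hf : ContDiffAt ℝ 3 f α) :
    HasQuadraticExpansion f α (f α) (deriv f α) (iteratedDeriv 2 f α / 2) := by
  refine (taylor_isBigO_of_contDiffAt (n := 3) hf).congr_left fun x => ?_
  simp only [Finset.sum_range_succ, Finset.sum_range_zero, smul_eq_mul, Nat.factorial,
    iteratedDeriv_zero, iteratedDeriv_one]
  push_cast
  ring

theorem deriv_of_contDiffAt (hf : ContDiffAt ℝ 4 f α) :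
    HasQuadraticExpansion (deriv f) α
      (deriv f α) (iteratedDeriv 2 f α) (iteratedDeriv 3 f α / 2) := by
  have hf' : ContDiffAt ℝ 3 (deriv f) α := hf.derivWithin (by norm_num)
  simpa [iteratedDeriv_succ'] using of_contDiffAt hf'

theorem dslope_of_contDiffAt (hf : ContDiffAt ℝ 4 f α) :
    HasQuadraticExpansion (dslope f α) α
      (deriv f α) (iteratedDeriv 2 f α / 2) (iteratedDeriv 3 f α / 6) := by
  refine dslope_sub_isBigO_pow (by simp) ?_
  refine (taylor_isBigO_of_contDiffAt (n := 4) hf).congr_left fun x => ?_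
  simp only [Finset.sum_range_succ, Finset.sum_range_zero, smul_eq_mul, Nat.factorial,
    iteratedDeriv_zero, iteratedDeriv_one]
  push_cast
  ring

end HasQuadraticExpansion

/-- The quotient `(y − α)/(x − α)` of consecutive errors for a Newton step `y` towards a root `α`
of `f`, extended to `x = α` through the difference quotient `dslope f α x`. -/
noncomputable def newtonFactor (f : ℝ → ℝ) (α x : ℝ) : ℝ := 1 - dslope f α x / deriv f x

/-- The two-step method whose second step corrects the Newton iterate `y` by
`H(f(y)/f(x)) · f(y)/f′(x)`, for a weight function `H`. -/
noncomputable def weightedNewtonStep (H f : ℝ → ℝ) (x : ℝ) : ℝ :=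
  newtonStep f x - H (f (newtonStep f x) / f x) * (f (newtonStep f x) / deriv f x)

section Error

variable {f H : ℝ → ℝ} {α d c₂ c₃ η : ℝ}

theorem eq_sub_mul_dslope_of_root (hroot : f α = 0) (x : ℝ) : f x = (x - α) * dslope f α x :=
  (sub_smul_dslope_of_zero hroot x).symm

theorem newtonStep_sub_root (hroot : f α = 0) (x : ℝ) :
    newtonStep f x - α = (x - α) * newtonFactor f α x := by
  rw [newtonStep, newtonFactor, eq_sub_mul_dslope_of_root hroot x]
  ring

theorem div_newtonStep_of_root (hroot : f α = 0) {x : ℝ} (hx : x ≠ α) :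
    f (newtonStep f x) / f x =
      newtonFactor f α x * dslope f α (newtonStep f x) / dslope f α x := by
  rw [eq_sub_mul_dslope_of_root hroot (newtonStep f x), eq_sub_mul_dslope_of_root hroot x,
    newtonStep_sub_root hroot, mul_assoc, mul_div_mul_left _ _ (sub_ne_zero.2 hx)]

/-- The relative error of the correction in `weightedNewtonStep H f` at a root `α` of `f`, where
`f(y)/f(x)` is written as a quotient that is regular at `x = α`. -/
noncomputable def correctionError (H f : ℝ → ℝ) (α x : ℝ) : ℝ :=
  1 - H (newtonFactor f α x * dslope f α (newtonStep f x) / dslope f α x) *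
    (dslope f α (newtonStep f x) / deriv f x)

theorem weightedNewtonStep_sub_root (hroot : f α = 0) {x : ℝ} (hx : x ≠ α) :
    weightedNewtonStep H f x - α =
      (x - α) * newtonFactor f α x * correctionError H f α x := by
  rw [weightedNewtonStep, correctionError, div_newtonStep_of_root hroot hx,
    eq_sub_mul_dslope_of_root hroot (newtonStep f x), ← newtonStep_sub_root hroot x]
  ring

theorem hasQuadraticExpansion_newtonFactor (hd : d ≠ 0)
    (hg : HasQuadraticExpansion (dslope f α) α d (d * c₂) (d * c₃))
    (hf' : HasQuadraticExpansion (deriv f) α d (2 * d * c₂) (3 * d * c₃)) :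
    HasQuadraticExpansion (newtonFactor f α) α
      0 c₂ (2 * c₃ - 2 * c₂ ^ 2) := by
  have hquot : HasQuadraticExpansion (fun x => dslope f α x / deriv f x) α
      1 (-c₂) (2 * c₂ ^ 2 - 2 * c₃) := by
    refine .div ?_ hf' hd
    convert hg using 1 <;> ring
  unfold newtonFactor
  convert (HasQuadraticExpansion.const α 1).sub hquot using 1 <;> ring

theorem hasQuadraticExpansion_newtonStep (hroot : f α = 0) (hd : d ≠ 0)
    (hg : HasQuadraticExpansion (dslope f α) α d (d * c₂) (d * c₃))
    (hf' : HasQuadraticExpansion (deriv f) α d (2 * d * c₂) (3 * d * c₃)) :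
    HasQuadraticExpansion (newtonStep f) α α 0 c₂ := by
  have hfactor := hasQuadraticExpansion_newtonFactor hd hg hf'
  have hy : HasQuadraticExpansion
      (fun x => α + (x - α) * newtonFactor f α x) α α 0 c₂ := by
    simpa using (HasQuadraticExpansion.const α α).add
      (((HasQuadraticExpansion.id α).sub (.const α α)).mul hfactor)
  convert hy using 1
  funext x
  exact sub_eq_iff_eq_add'.1 (newtonStep_sub_root hroot x)

theorem hasQuadraticExpansion_correctionError (hroot : f α = 0) (hd : d ≠ 0)
    (hg : HasQuadraticExpansion (dslope f α) α d (d * c₂) (d * c₃))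
    (hf' : HasQuadraticExpansion (deriv f) α d (2 * d * c₂) (3 * d * c₃))
    (hH : HasQuadraticExpansion H 0 1 2 η) :
    HasQuadraticExpansion (correctionError H f α) α 0 0 ((5 - η) * c₂ ^ 2 - c₃) := by
  have hgy : HasQuadraticExpansion (fun x => dslope f α (newtonStep f x)) α
      d 0 (d * c₂ ^ 2) := by
    convert hg.comp (hasQuadraticExpansion_newtonStep hroot hd hg hf') using 1 <;> ring
  have hratio : HasQuadraticExpansion
      (fun x => newtonFactor f α x * dslope f α (newtonStep f x) / dslope f α x) α
      0 c₂ (2 * c₃ - 3 * c₂ ^ 2) := by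
    refine .div ?_ hg hd
    convert (hasQuadraticExpansion_newtonFactor hd hg hf').mul hgy using 1 <;> ring
  have hweight := hH.comp hratio
  have hscale : HasQuadraticExpansion (fun x => dslope f α (newtonStep f x) / deriv f x) α
      1 (-(2 * c₂)) (5 * c₂ ^ 2 - 3 * c₃) := by
    refine .div ?_ hf' hd
    convert hgy using 1 <;> ring
  unfold correctionError
  convert (HasQuadraticExpansion.const α 1).sub (hweight.mul hscale) using 1 <;> ring

theorem weightedNewtonStep_fourth_order (hroot : f α = 0) (hd : d ≠ 0)
    (hg : HasQuadraticExpansion (dslope f α) α d (d * c₂) (d * c₃))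
    (hf' : HasQuadraticExpansion (deriv f) α d (2 * d * c₂) (3 * d * c₃))
    (hH : HasQuadraticExpansion H 0 1 2 η) :
    (fun x => weightedNewtonStep H f x - α - c₂ * ((5 - η) * c₂ ^ 2 - c₃) * (x - α) ^ 4)
      =O[𝓝[≠] α] fun x => (x - α) ^ 5 := by
  set K := (5 - η) * c₂ ^ 2 - c₃
  set ρ := newtonFactor f α
  set σ := correctionError H f α
  have hρ : HasQuadraticExpansion ρ α 0 c₂ (2 * c₃ - 2 * c₂ ^ 2) :=
    hasQuadraticExpansion_newtonFactor hd hg hf'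
  have hσ : HasQuadraticExpansion σ α 0 0 K :=
    hasQuadraticExpansion_correctionError hroot hd hg hf' hH
  have hρ_small : ρ =O[𝓝 α] fun x => x - α := by simpa using hρ.sub_const_isBigO
  have hρ_linear : (fun x => ρ x - c₂ * (x - α)) =O[𝓝 α] fun x => (x - α) ^ 2 := by
    simpa using hρ.sub_linear_isBigO
  have hσ_quadratic : (fun x => σ x - K * (x - α) ^ 2) =O[𝓝 α] fun x => (x - α) ^ 3 := by
    simpa [HasQuadraticExpansion] using hσ
  have hρ_error : (fun x => (x - α) * ((ρ x - c₂ * (x - α)) * (K * (x - α) ^ 2)))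
      =O[𝓝 α] fun x => (x - α) ^ 5 :=
    ((isBigO_refl (fun x => x - α) _).mul (hρ_linear.mul
      ((isBigO_refl (fun x => (x - α) ^ 2) _).const_mul_left K))).congr_right fun x => by ring
  have hσ_error : (fun x => (x - α) * (ρ x * (σ x - K * (x - α) ^ 2)))
      =O[𝓝 α] fun x => (x - α) ^ 5 :=
    ((isBigO_refl (fun x => x - α) _).mul (hρ_small.mul hσ_quadratic)).congr_right
      fun x => by ring
  refine ((hρ_error.add hσ_error).mono nhdsWithin_le_nhds).congr' ?_ EventuallyEq.rfl
  filter_upwards [self_mem_nhdsWithin] with x hx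
  rw [weightedNewtonStep_sub_root hroot hx]
  ring

end Error

/-- The weight `H` for which `weightedNewtonStep H` is `kungStep`, obtained by dividing the fraction
`(2f(x) − f(y))/(2f(x) − 5f(y))` through by `f(x)`, with `t = f(y)/f(x)`. -/
noncomputable def kungWeight (t : ℝ) : ℝ := (2 - t) / (2 - 5 * t)

theorem hasQuadraticExpansion_kungWeight : HasQuadraticExpansion kungWeight 0 1 2 5 := by
  have hden : HasQuadraticExpansion (fun t : ℝ => 2 - 5 * t) 0 2 (-5) 0 := by
    simpa using (HasQuadraticExpansion.const (0 : ℝ) 2).sub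
      ((HasQuadraticExpansion.const (0 : ℝ) 5).mul (.id 0))
  refine .div ?_ hden two_ne_zero
  convert (HasQuadraticExpansion.const (0 : ℝ) 2).sub (.id 0) using 1 <;> norm_num

theorem kungStep_eq_weightedNewtonStep {f : ℝ → ℝ} {x : ℝ} (hx : f x ≠ 0) :
    kungStep f x = weightedNewtonStep kungWeight f x := by
  have hnum : 2 * f x - f (newtonStep f x) = f x * (2 - f (newtonStep f x) / f x) := by
    field_simp
  have hden : 2 * f x - 5 * f (newtonStep f x) = f x * (2 - 5 * (f (newtonStep f x) / f x)) := by
    field_simp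
  rw [kungStep, weightedNewtonStep, kungWeight, hnum, hden, mul_div_mul_left _ _ hx]

theorem kung_step_fourth_order_general {f : ℝ → ℝ} {α : ℝ} (hf : ContDiffAt ℝ 4 f α)
    (hroot : f α = 0) (hsimple : deriv f α ≠ 0) {c₂ c₃ : ℝ}
    (hc₂ : c₂ = iteratedDeriv 2 f α / (2 * deriv f α))
    (hc₃ : c₃ = iteratedDeriv 3 f α / (6 * deriv f α)) :
    (fun x => kungStep f x - α - (-(c₂ * c₃) * (x - α) ^ 4))
      =O[𝓝[≠] α] fun x => (x - α) ^ 5 := by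
  have h₂ : iteratedDeriv 2 f α = 2 * deriv f α * c₂ := by rw [hc₂]; field_simp
  have h₃ : iteratedDeriv 3 f α = 6 * deriv f α * c₃ := by rw [hc₃]; field_simp
  have hg : HasQuadraticExpansion (dslope f α) α
      (deriv f α) (deriv f α * c₂) (deriv f α * c₃) := by
    convert HasQuadraticExpansion.dslope_of_contDiffAt hf using 1
    · linear_combination -h₂ / 2
    · linear_combination -h₃ / 6
  have hf' : HasQuadraticExpansion (deriv f) α
      (deriv f α) (2 * deriv f α * c₂) (3 * deriv f α * c₃) := by
    convert HasQuadraticExpansion.deriv_of_contDiffAt hf using 1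
    · exact h₂.symm
    · linear_combination -h₃ / 2
  have hne : ∀ᶠ x in 𝓝[≠] α, f x ≠ 0 :=
    (differentiableAt_of_deriv_ne_zero hsimple).hasDerivAt.eventually_ne hsimple
  refine (weightedNewtonStep_fourth_order hroot hsimple hg hf'
    hasQuadraticExpansion_kungWeight).congr' ?_ EventuallyEq.rfl
  filter_upwards [hne] with x hx
  rw [kungStep_eq_weightedNewtonStep hx]
  ring

theorem kung_step_fourth_order (f : ℝ → ℝ) (α : ℝ)
    (hf : ∃ s ∈ 𝓝 α, ContDiffOn ℝ (⊤ : ℕ∞) f s)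
    (hroot : f α = 0) (hsimple : deriv f α ≠ 0)
    (c₂ c₃ c₄ : ℝ)
    (hc₂ : c₂ = iteratedDeriv 2 f α / (2 * deriv f α))
    (hc₃ : c₃ = iteratedDeriv 3 f α / (6 * deriv f α))
    (hc₄ : c₄ = iteratedDeriv 4 f α / (24 * deriv f α)) :
    (fun x => kungStep f x - α - (-(c₂ * c₃) * (x - α) ^ 4))
      =O[𝓝[≠] α] fun x => (x - α) ^ 5 := by
  obtain ⟨s, hs, hfs⟩ := hf
  have hf4 : ContDiffAt ℝ 4 f α := by
    exact_mod_cast contDiffAt_infty.1 (hfs.contDiffAt hs) 4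
  exact kung_step_fourth_order_general hf4 hroot hsimple hc₂ hc₃
end

section
/- Let f : ℝ → ℝ be C^∞ on a neighborhood of a point α with f(α) = 0 and f′(α) ≠ 0, and set c₂ = f″(α)/(2 f′(α)), c₃ = f‴(α)/(6 f′(α)). Define y(x) = x − f(x)/f′(x) and z(x) = y(x) − ((2f(x) − f(y(x)))/(2f(x) − 5f(y(x))))·(f(y(x))/f′(x)). Then, as x → α, f(z(x)) = f′(α)·[−c₂c₃(x−α)⁴ + O((x−α)⁵)]. -/
open Filter Topology Asymptotics

/-!
Write `e = x - α`, `v = y - α`, `w = z - α` and `f x = (x - α) * g x`, so that `f y = v * g y`.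
Newton's step is `v = c₂ e² + O(e³)`, and the second step is `w = v * (1 - A * g y / f' x)` with
`A = (2 f x - f y) / (2 f x - 5 f y) = 1 + 2 c₂ e + (4 c₃ - c₂²) e² + O(e³)`. Since `v` is already
quadratic in `e`, the factor `1 - A * g y / f' x` is needed only to leading order, and there it is
`-c₃ e²`: the constant and linear terms cancel. Hence `w = -c₂ c₃ e⁴ + O(e⁵)`, and `f z` is
`f' α * w` up to `O(w²)`.
-/

section Expansion

open Polynomial

variable {ι 𝕜 : Type*} [NormedField 𝕜] {l : Filter ι} {ε g h : ι → 𝕜} {m n j k : ℕ} {P Q S : 𝕜[X]}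

/-- The asymptotic expansion `g = P(ε) + O(ε ^ n)` along the filter `l`, where `ε` is typically a
quantity tending to `0`. The polynomial `P` matters only modulo `X ^ n` and need not be truncated,
so that algebra on expansions is algebra on polynomials. -/
def HasPolynomialExpansion (l : Filter ι) (ε : ι → 𝕜) (n : ℕ) (g : ι → 𝕜) (P : 𝕜[X]) : Prop :=
  (fun i => g i - P.eval (ε i)) =O[l] fun i => ε i ^ n

theorem isBigO_eval_of_X_pow_dvd (hε : Tendsto ε l (𝓝 0)) (hP : X ^ n ∣ P) :
    (fun i => P.eval (ε i)) =O[l] fun i => ε i ^ n := by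
  obtain ⟨Q, rfl⟩ := hP
  have hQ : (fun i => Q.eval (ε i)) =O[l] fun _ => (1 : 𝕜) :=
    ((Q.continuous.tendsto 0).comp hε).isBigO_one 𝕜
  simpa using (isBigO_refl (fun i => ε i ^ n) l).mul hQ

theorem isBigO_pow_of_le (hε : Tendsto ε l (𝓝 0)) (hmn : m ≤ n) :
    (fun i => ε i ^ n) =O[l] fun i => ε i ^ m := by
  simpa using isBigO_eval_of_X_pow_dvd hε (pow_dvd_pow X hmn)

namespace HasPolynomialExpansion

theorem eval (l : Filter ι) (ε : ι → 𝕜) (n : ℕ) (P : 𝕜[X]) :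
    HasPolynomialExpansion l ε n (fun i => P.eval (ε i)) P := by
  simpa [HasPolynomialExpansion] using isBigO_zero _ _

theorem self (l : Filter ι) (ε : ι → 𝕜) (n : ℕ) : HasPolynomialExpansion l ε n ε X := by
  simpa using eval l ε n X

theorem congr' (hg : HasPolynomialExpansion l ε n g P) (hgh : g =ᶠ[l] h) :
    HasPolynomialExpansion l ε n h P :=
  IsBigO.congr' hg (hgh.sub EventuallyEq.rfl) EventuallyEq.rfl

theorem mono_filter {l' : Filter ι} (hg : HasPolynomialExpansion l ε n g P) (hl : l' ≤ l) :
    HasPolynomialExpansion l' ε n g P :=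
  IsBigO.mono hg hl

theorem comp_tendsto {κ : Type*} {l' : Filter κ} {u : κ → ι}
    (hg : HasPolynomialExpansion l ε n g P) (hu : Tendsto u l' l) :
    HasPolynomialExpansion l' (ε ∘ u) n (g ∘ u) P :=
  IsBigO.comp_tendsto hg hu

theorem of_dvd_sub (hg : HasPolynomialExpansion l ε n g P) (hε : Tendsto ε l (𝓝 0))
    (hmn : m ≤ n) (hPQ : X ^ m ∣ P - Q) : HasPolynomialExpansion l ε m g Q :=
  ((IsBigO.trans hg (isBigO_pow_of_le hε hmn)).add (isBigO_eval_of_X_pow_dvd hε hPQ)).congr_left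
    fun i => by rw [eval_sub, sub_add_sub_cancel]

theorem isBigO (hg : HasPolynomialExpansion l ε n g P) (hε : Tendsto ε l (𝓝 0))
    (hkn : k ≤ n) (hP : X ^ k ∣ P) : g =O[l] fun i => ε i ^ k := by
  simpa [HasPolynomialExpansion] using hg.of_dvd_sub (Q := 0) hε hkn (by simpa using hP)

theorem tendsto (hg : HasPolynomialExpansion l ε n g P) (hε : Tendsto ε l (𝓝 0)) (hn : n ≠ 0) :
    Tendsto g l (𝓝 (P.coeff 0)) := by
  have hrem : Tendsto (fun i => g i - P.eval (ε i)) l (𝓝 0) :=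
    IsBigO.trans_tendsto hg (by simpa [hn] using hε.pow n)
  have hP : Tendsto (fun i => P.eval (ε i)) l (𝓝 (P.coeff 0)) := by
    rw [coeff_zero_eq_eval_zero]
    exact (P.continuous.tendsto 0).comp hε
  simpa using hrem.add hP

theorem add (hg : HasPolynomialExpansion l ε n g P) (hh : HasPolynomialExpansion l ε n h Q) :
    HasPolynomialExpansion l ε n (fun i => g i + h i) (P + Q) :=
  (IsBigO.add hg hh).congr_left fun i => by rw [eval_add]; ring

theorem sub (hg : HasPolynomialExpansion l ε n g P) (hh : HasPolynomialExpansion l ε n h Q) :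
    HasPolynomialExpansion l ε n (fun i => g i - h i) (P - Q) :=
  (IsBigO.sub hg hh).congr_left fun i => by rw [eval_sub]; ring

theorem one_sub (hg : HasPolynomialExpansion l ε n g P) :
    HasPolynomialExpansion l ε n (fun i => 1 - g i) (1 - P) := by
  simpa using (eval l ε n 1).sub hg

/-- A factor of order `ε ^ j` improves the precision of the other factor by `j` orders. -/
theorem mul_of_X_pow_dvd (hg : HasPolynomialExpansion l ε (n + j) g P)
    (hh : HasPolynomialExpansion l ε (n + k) h Q) (hε : Tendsto ε l (𝓝 0))
    (hP : X ^ j ∣ P) (hQ : X ^ k ∣ Q) :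
    HasPolynomialExpansion l ε (n + j + k) (fun i => g i * h i) (P * Q) := by
  have hleft := IsBigO.mul hg (hh.isBigO hε (Nat.le_add_left k n) hQ)
  have hright := (isBigO_eval_of_X_pow_dvd hε hP).mul hh
  refine ((hleft.congr_right fun i => ?_).add
    (hright.congr_right fun i => ?_)).congr_left fun i => ?_
  · ring
  · ring
  · rw [eval_mul]; ring

theorem mul (hg : HasPolynomialExpansion l ε n g P) (hh : HasPolynomialExpansion l ε n h Q)
    (hε : Tendsto ε l (𝓝 0)) : HasPolynomialExpansion l ε n (fun i => g i * h i) (P * Q) :=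
  mul_of_X_pow_dvd (j := 0) (k := 0) hg hh hε (by simp) (by simp)

theorem const_mul (a : 𝕜) (hg : HasPolynomialExpansion l ε n g P) :
    HasPolynomialExpansion l ε n (fun i => a * g i) (C a * P) :=
  (IsBigO.const_mul_left hg a).congr_left fun i => by rw [eval_mul, eval_C, mul_sub]

theorem div (hg : HasPolynomialExpansion l ε n g P) (hh : HasPolynomialExpansion l ε n h Q)
    (hε : Tendsto ε l (𝓝 0)) (hn : n ≠ 0) (hQ : Q.coeff 0 ≠ 0) (hS : X ^ n ∣ P - Q * S) :
    HasPolynomialExpansion l ε n (fun i => g i / h i) S := by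
  have hlim : Tendsto h l (𝓝 (Q.coeff 0)) := hh.tendsto hε hn
  have hinv : (fun i => (h i)⁻¹) =O[l] fun _ => (1 : 𝕜) := (hlim.inv₀ hQ).isBigO_one 𝕜
  have hnum : (fun i => g i - h i * S.eval (ε i)) =O[l] fun i => ε i ^ n :=
    (hg.sub (hh.mul (eval l ε n S) hε)).isBigO hε le_rfl hS
  refine (hnum.mul hinv).congr' ?_ (Eventually.of_forall fun i => mul_one _)
  filter_upwards [hlim.eventually_ne hQ] with i hi
  field_simp

theorem comp {δ : ι → 𝕜} (hg : HasPolynomialExpansion l δ m g P)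
    (hδ : HasPolynomialExpansion l ε n δ Q) (hε : Tendsto ε l (𝓝 0)) (hjn : j ≤ n)
    (hQ : X ^ j ∣ Q) (hnjm : n ≤ j * m) : HasPolynomialExpansion l ε n g (P.comp Q) := by
  have hpoly : HasPolynomialExpansion l ε n (fun i => P.eval (δ i)) (P.comp Q) := by
    clear hg
    induction P using Polynomial.induction_on with
    | C a => simpa using eval l ε n (C a)
    | add P₁ P₂ h₁ h₂ => simpa using h₁.add h₂
    | monomial p a hp => simpa [pow_succ, mul_assoc] using hp.mul hδ hε
  have hrem : (fun i => δ i ^ m) =O[l] fun i => ε i ^ n :=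
    (((hδ.isBigO hε hjn hQ).pow m).congr_right fun i => (pow_mul _ _ _).symm).trans
      (isBigO_pow_of_le hε hnjm)
  exact ((IsBigO.trans hg hrem).add hpoly).congr_left fun i => sub_add_sub_cancel _ _ _

theorem exists_eq_mul (hg : HasPolynomialExpansion l ε (n + 1) g (X * P)) :
    ∃ q : ι → 𝕜, HasPolynomialExpansion l ε n q P ∧ g =ᶠ[l] fun i => ε i * q i := by
  have hpow : (fun i => ε i ^ (n + 1) * (ε i)⁻¹) =O[l] fun i => ε i ^ n :=
    isBigO_of_le l fun i => by
      by_cases hi : ε i = 0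
      · simp [hi]
      · rw [pow_succ, mul_inv_cancel_right₀ hi]
  have hquot := (IsBigO.mul hg (isBigO_refl (fun i => (ε i)⁻¹) l)).trans hpow
  refine ⟨fun i => P.eval (ε i) + (g i - (X * P).eval (ε i)) * (ε i)⁻¹,
    hquot.congr_left fun i => (add_sub_cancel_left _ _).symm, ?_⟩
  filter_upwards [hg.eq_zero_imp] with i hzero
  rw [eval_mul, eval_X] at hzero ⊢
  by_cases hi : ε i = 0
  · simpa [hi] using hzero
  · field_simp
    ring

end HasPolynomialExpansion

theorem hasPolynomialExpansion_taylor {f : ℝ → ℝ} {α : ℝ} {n : ℕ} (hf : ContDiffAt ℝ n f α) :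
    HasPolynomialExpansion (𝓝 α) (fun x => x - α) n f
      (∑ k ∈ Finset.range n, C (iteratedDeriv k f α / k.factorial) * X ^ k) := by
  obtain ⟨u, hu, hfu⟩ := hf.contDiffOn le_rfl (by simp)
  obtain ⟨r, hr, hball⟩ := Metric.mem_nhds_iff.1 hu
  have hmem : α ∈ Metric.ball α r := Metric.mem_ball_self hr
  have htaylor := (taylor_isLittleO (convex_ball α r) hmem (hfu.mono hball)).isBigO
  rw [Metric.isOpen_ball.nhdsWithin_eq hmem] at htaylor
  have hlast : (fun x => iteratedDeriv n f α / n.factorial * (x - α) ^ n)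
      =O[𝓝 α] fun x => (x - α) ^ n := (isBigO_refl _ _).const_mul_left _
  refine (htaylor.add hlast).congr_left fun x => ?_
  simp only [taylor_within_apply, Finset.sum_range_succ, smul_eq_mul, eval_finsetSum, eval_mul,
    eval_C, eval_pow, eval_X, iteratedDerivWithin_of_isOpen Metric.isOpen_ball hmem]
  simp only [div_eq_inv_mul, mul_right_comm]
  ring

end Expansion

section KungStep

open Polynomial

theorem tendsto_sub_self_nhds (α : ℝ) : Tendsto (fun x => x - α) (𝓝 α) (𝓝 0) :=
  tendsto_sub_nhds_zero_iff.2 tendsto_id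

/-- The third-order expansions of `f` and `f'` at a simple root `α` of `f`, normalised by
`a = f' α`. The factor `X` of the first is kept apart because the argument works with the cofactor
`g` in `f x = (x - α) * g x`. -/
structure HasSimpleRootExpansion (f : ℝ → ℝ) (α a c₂ c₃ : ℝ) : Prop where
  ne_zero : a ≠ 0
  expansion : HasPolynomialExpansion (𝓝 α) (fun x => x - α) 4 f
    (X * (C a * (1 + C c₂ * X + C c₃ * X ^ 2)))
  deriv_expansion : HasPolynomialExpansion (𝓝 α) (fun x => x - α) 3 (deriv f)
    (C a * (1 + 2 * C c₂ * X + 3 * C c₃ * X ^ 2))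

variable {f g : ℝ → ℝ} {α a c₂ c₃ : ℝ}

theorem hasSimpleRootExpansion_of_contDiffAt (hf : ContDiffAt ℝ 4 f α) (hroot : f α = 0)
    (hsimple : deriv f α ≠ 0) :
    HasSimpleRootExpansion f α (deriv f α) (iteratedDeriv 2 f α / (2 * deriv f α))
      (iteratedDeriv 3 f α / (6 * deriv f α)) := by
  generalize hc₂ : iteratedDeriv 2 f α / (2 * deriv f α) = c₂
  generalize hc₃ : iteratedDeriv 3 f α / (6 * deriv f α) = c₃
  have hf' : ContDiffAt ℝ 3 (deriv f) α := hf.derivWithin (by norm_num)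
  have hcoeff₂ : iteratedDeriv 2 f α / Nat.factorial 2 = deriv f α * c₂ := by
    rw [← hc₂, Nat.factorial_two]; push_cast; field_simp
  have hcoeff₃ : iteratedDeriv 3 f α / Nat.factorial 3 = deriv f α * c₃ := by
    rw [← hc₃, show Nat.factorial 3 = 6 from rfl]; push_cast; field_simp
  have hcoeff₁' : iteratedDeriv 1 (deriv f) α / Nat.factorial 1 = deriv f α * (2 * c₂) := by
    rw [← iteratedDeriv_succ', ← hc₂, Nat.factorial_one]; push_cast; field_simp
  have hcoeff₂' : iteratedDeriv 2 (deriv f) α / Nat.factorial 2 = deriv f α * (3 * c₃) := by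
    rw [← iteratedDeriv_succ', ← hc₃, Nat.factorial_two]; push_cast; field_simp; ring
  refine ⟨hsimple, ?_, ?_⟩
  · convert hasPolynomialExpansion_taylor (n := 4) hf using 1
    simp only [Finset.sum_range_succ, Finset.sum_range_zero, hcoeff₂, hcoeff₃, iteratedDeriv_zero,
      iteratedDeriv_one, hroot, zero_div, Nat.factorial_one, Nat.cast_one, div_one, map_zero,
      map_mul]
    ring
  · convert hasPolynomialExpansion_taylor (n := 3) hf' using 1
    simp only [Finset.sum_range_succ, Finset.sum_range_zero, hcoeff₁', hcoeff₂', iteratedDeriv_zero,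
      Nat.factorial_zero, Nat.cast_one, div_one, map_mul, map_ofNat]
    ring

namespace HasSimpleRootExpansion

theorem expansion_newtonStep_sub (hf : HasSimpleRootExpansion f α a c₂ c₃) :
    HasPolynomialExpansion (𝓝 α) (fun x => x - α) 4 (fun x => newtonStep f x - α)
      (X * (C c₂ * X + 2 * (C c₃ - C c₂ ^ 2) * X ^ 2)) := by
  have hε := tendsto_sub_self_nhds α
  obtain ⟨g, hg, hfg⟩ := hf.expansion.exists_eq_mul
  have hquot : HasPolynomialExpansion (𝓝 α) (fun x => x - α) 3 (fun x => g x / deriv f x)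
      (1 - C c₂ * X - 2 * (C c₃ - C c₂ ^ 2) * X ^ 2) := by
    refine hg.div hf.deriv_expansion hε three_ne_zero (by simpa using hf.ne_zero) ?_
    exact ⟨C a * (C c₂ * (7 * C c₃ - 4 * C c₂ ^ 2) + 6 * C c₃ * (C c₃ - C c₂ ^ 2) * X), by ring⟩
  have hprod := (HasPolynomialExpansion.self _ _ 4).mul_of_X_pow_dvd (n := 3) (j := 1) (k := 0)
    hquot.one_sub hε (by simp) (by simp)
  refine (hprod.of_dvd_sub hε le_rfl ⟨0, by ring⟩).congr' ?_
  filter_upwards [hfg] with x hx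
  rw [newtonStep, hx]
  ring

theorem tendsto_newtonStep (hf : HasSimpleRootExpansion f α a c₂ c₃) :
    Tendsto (newtonStep f) (𝓝 α) (𝓝 α) :=
  tendsto_sub_nhds_zero_iff.1 <| by
    simpa using hf.expansion_newtonStep_sub.tendsto (tendsto_sub_self_nhds α) four_ne_zero

theorem expansion_cofactor_newtonStep (hf : HasSimpleRootExpansion f α a c₂ c₃)
    (hg : HasPolynomialExpansion (𝓝 α) (fun x => x - α) 3 g
      (C a * (1 + C c₂ * X + C c₃ * X ^ 2))) :
    HasPolynomialExpansion (𝓝 α) (fun x => x - α) 3 (fun x => g (newtonStep f x))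
      (C a * (1 + C c₂ ^ 2 * X ^ 2)) := by
  have hε := tendsto_sub_self_nhds α
  have hcomp := (hg.comp_tendsto hf.tendsto_newtonStep).comp (j := 2) hf.expansion_newtonStep_sub hε
    (by norm_num) ⟨C c₂ + 2 * (C c₃ - C c₂ ^ 2) * X, by ring⟩ (by norm_num)
  refine hcomp.of_dvd_sub hε (by norm_num) ⟨C a * (2 * C c₂ * (C c₃ - C c₂ ^ 2) +
    C c₃ * X * (C c₂ + 2 * (C c₃ - C c₂ ^ 2) * X) ^ 2), ?_⟩
  simp only [mul_comp, add_comp, pow_comp, C_comp, X_comp, one_comp]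
  ring

theorem expansion_kung_weight (hf : HasSimpleRootExpansion f α a c₂ c₃) :
    HasPolynomialExpansion (𝓝[≠] α) (fun x => x - α) 3
      (fun x => (2 * f x - f (newtonStep f x)) / (2 * f x - 5 * f (newtonStep f x)))
      (1 + 2 * C c₂ * X + (4 * C c₃ - C c₂ ^ 2) * X ^ 2) := by
  have hε := tendsto_sub_self_nhds α
  obtain ⟨g, hg, hfg⟩ := hf.expansion.exists_eq_mul
  obtain ⟨u, hu, hvu⟩ := hf.expansion_newtonStep_sub.exists_eq_mul
  have hfy : HasPolynomialExpansion (𝓝 α) (fun x => x - α) 3 (fun x => u x * g (newtonStep f x))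
      (C a * (C c₂ * X + 2 * (C c₃ - C c₂ ^ 2) * X ^ 2)) :=
    (hu.mul (hf.expansion_cofactor_newtonStep hg) hε).of_dvd_sub hε le_rfl
      ⟨C a * C c₂ ^ 2 * (C c₂ + 2 * (C c₃ - C c₂ ^ 2) * X), by ring⟩
  have hquot := ((hg.const_mul 2).sub hfy).div
    (S := 1 + 2 * C c₂ * X + (4 * C c₃ - C c₂ ^ 2) * X ^ 2)
    ((hg.const_mul 2).sub (hfy.const_mul 5)) hε three_ne_zero (by simpa using hf.ne_zero)
    ⟨C a * (C c₂ * (28 * C c₃ - 23 * C c₂ ^ 2)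
      + (8 * C c₃ - 10 * C c₂ ^ 2) * (4 * C c₃ - C c₂ ^ 2) * X), by simp only [map_ofNat]; ring⟩
  refine (hquot.mono_filter nhdsWithin_le_nhds).congr' ?_
  filter_upwards [self_mem_nhdsWithin, nhdsWithin_le_nhds hfg, nhdsWithin_le_nhds hvu,
    nhdsWithin_le_nhds (hf.tendsto_newtonStep.eventually hfg)] with x hx hfx hv hfy
  rw [hfy, hv, hfx, ← mul_div_mul_left _ _ (sub_ne_zero.2 hx)]
  congr 1 <;> ring

theorem expansion_kungStep_sub (hf : HasSimpleRootExpansion f α a c₂ c₃) :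
    HasPolynomialExpansion (𝓝[≠] α) (fun x => x - α) 5 (fun x => kungStep f x - α)
      (-(C c₂ * C c₃) * X ^ 4) := by
  have hle : 𝓝[≠] α ≤ 𝓝 α := nhdsWithin_le_nhds
  have hε := (tendsto_sub_self_nhds α).mono_left hle
  obtain ⟨g, hg, hfg⟩ := hf.expansion.exists_eq_mul
  have hweight := hf.expansion_kung_weight.mul
    ((hf.expansion_cofactor_newtonStep hg).mono_filter hle) hε
  have hquot := hweight.div (S := 1 + C c₃ * X ^ 2) (hf.deriv_expansion.mono_filter hle) hε
    three_ne_zero (by simpa using hf.ne_zero) ⟨C a * (2 * C c₂ * (C c₂ ^ 2 - C c₃) +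
      (C c₂ ^ 2 * (4 * C c₃ - C c₂ ^ 2) - 3 * C c₃ ^ 2) * X), by ring⟩
  have hfactor : HasPolynomialExpansion (𝓝[≠] α) (fun x => x - α) 3
      (fun x => 1 - (2 * f x - f (newtonStep f x)) / (2 * f x - 5 * f (newtonStep f x)) *
        g (newtonStep f x) / deriv f x) (-C c₃ * X ^ 2) :=
    hquot.one_sub.of_dvd_sub hε le_rfl ⟨0, by ring⟩
  have hv : HasPolynomialExpansion (𝓝[≠] α) (fun x => x - α) 3 (fun x => newtonStep f x - α)
      (C c₂ * X ^ 2) :=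
    (hf.expansion_newtonStep_sub.mono_filter hle).of_dvd_sub hε (by norm_num)
      ⟨2 * (C c₃ - C c₂ ^ 2), by ring⟩
  have hprod := hv.mul_of_X_pow_dvd (n := 1) (j := 2) (k := 2) hfactor hε
    (dvd_mul_left _ _) (dvd_mul_left _ _)
  refine (hprod.of_dvd_sub hε le_rfl ⟨0, by ring⟩).congr' ?_
  filter_upwards [hle (hf.tendsto_newtonStep.eventually hfg)] with x hfy
  rw [kungStep]
  generalize (2 * f x - f (newtonStep f x)) / (2 * f x - 5 * f (newtonStep f x)) = A
  rw [hfy]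
  ring

theorem expansion_comp_kungStep (hf : HasSimpleRootExpansion f α a c₂ c₃) :
    HasPolynomialExpansion (𝓝[≠] α) (fun x => x - α) 5 (fun x => f (kungStep f x))
      (C a * (-(C c₂ * C c₃) * X ^ 4)) := by
  have hε : Tendsto (fun x => x - α) (𝓝[≠] α) (𝓝 0) :=
    (tendsto_sub_self_nhds α).mono_left nhdsWithin_le_nhds
  have hz : Tendsto (kungStep f) (𝓝[≠] α) (𝓝 α) :=
    tendsto_sub_nhds_zero_iff.1 <| by simpa using hf.expansion_kungStep_sub.tendsto hε (by norm_num)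
  have hcomp := (hf.expansion.comp_tendsto hz).comp (j := 4) hf.expansion_kungStep_sub hε
    (by norm_num) (dvd_mul_left _ _) (by norm_num)
  refine hcomp.of_dvd_sub hε le_rfl ⟨C a * (C c₂ * C c₃) ^ 2 * X ^ 3 *
    (C c₂ - C c₃ * (C c₂ * C c₃ * X ^ 4)), ?_⟩
  simp only [mul_comp, add_comp, pow_comp, C_comp, X_comp, one_comp]
  ring

end HasSimpleRootExpansion

end KungStep

theorem f_at_kung_step_expansion_general (f : ℝ → ℝ) (α : ℝ)
    (hf : ContDiffAt ℝ 4 f α) (hroot : f α = 0) (hsimple : deriv f α ≠ 0)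
    (c₂ c₃ : ℝ)
    (hc₂ : c₂ = iteratedDeriv 2 f α / (2 * deriv f α))
    (hc₃ : c₃ = iteratedDeriv 3 f α / (6 * deriv f α)) :
    (fun x => f (kungStep f x) - deriv f α * (-(c₂ * c₃) * (x - α) ^ 4))
      =O[𝓝[≠] α] fun x => (x - α) ^ 5 := by
  subst hc₂ hc₃
  simpa [HasPolynomialExpansion] using
    (hasSimpleRootExpansion_of_contDiffAt hf hroot hsimple).expansion_comp_kungStep

theorem f_at_kung_step_expansion (f : ℝ → ℝ) (α : ℝ)
    (hf : ∃ s ∈ 𝓝 α, ContDiffOn ℝ (⊤ : ℕ∞) f s)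
    (hroot : f α = 0) (hsimple : deriv f α ≠ 0)
    (c₂ c₃ : ℝ)
    (hc₂ : c₂ = iteratedDeriv 2 f α / (2 * deriv f α))
    (hc₃ : c₃ = iteratedDeriv 3 f α / (6 * deriv f α)) :
    (fun x => f (kungStep f x) - deriv f α * (-(c₂ * c₃) * (x - α) ^ 4))
      =O[𝓝[≠] α] fun x => (x - α) ^ 5 := by
  obtain ⟨s, hs, hfs⟩ := hf
  exact f_at_kung_step_expansion_general f α (contDiffAt_infty.1 (hfs.contDiffAt hs) 4)
    hroot hsimple c₂ c₃ hc₂ hc₃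
end

section
/- Let f : ℝ → ℝ be C^∞ on a neighborhood of a point α with f(α) = 0 and f′(α) ≠ 0, and set c₂ = f″(α)/(2 f′(α)), c₃ = f‴(α)/(6 f′(α)), c₄ = f⁗(α)/(24 f′(α)). Define y(x) = x − f(x)/f′(x). Then, as x → α, the divided difference f[x, y(x)] = (f(x) − f(y(x)))/(x − y(x)) satisfies f[x, y(x)] = f′(α)·[1 + c₂(x−α) + (c₂² + c₃)(x−α)² + (−2c₂³ + 3c₃c₂ + c₄)(x−α)³ + O((x−α)⁴)]. -/
open Filter Topology Asymptotics

/-- The first-order divided difference `f[u,v] = (f(u) − f(v))/(u − v)`. -/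
noncomputable def divDiff (f : ℝ → ℝ) (u v : ℝ) : ℝ := (f u - f v) / (u - v)

/-!
Put `e = x - α`. Multiplying `y(x) - α` by `f'(x)` and comparing Taylor expansions gives
`y(x) - α = c₂ e² + 2 (c₃ - c₂²) e³ + O(e⁴)`. In particular `y(x) - α = o(e)`, so `x - y(x)` has
exact order `e`, and replacing `f` by its quartic Taylor polynomial changes the numerator of
`f[x, y(x)]` by `O(e⁵)` and the quotient by `O(e⁴)`. The divided difference of the quartic is a
polynomial in `e` and `y(x) - α`, into which the expansion of `y(x) - α` is substituted.
-/

lemma isBigO_mul_of_tendsto {X 𝕜 : Type*} [NormedField 𝕜] {l : Filter X} {g : X → 𝕜} {c : 𝕜}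
    (hg : Tendsto g l (𝓝 c)) (h : X → 𝕜) : (fun x => g x * h x) =O[l] h := by
  simpa only [one_mul] using (hg.isBigO_one 𝕜).mul (isBigO_refl h l)

lemma tendsto_sub_nhdsNE {G : Type*} [AddGroup G] [TopologicalSpace G] [IsTopologicalAddGroup G]
    (α : G) : Tendsto (fun x => x - α) (𝓝[≠] α) (𝓝 0) :=
  tendsto_sub_nhds_zero_iff.mpr (tendsto_id.mono_left nhdsWithin_le_nhds)

lemma isBigO_sub_taylor {E : Type*} [NormedAddCommGroup E] [NormedSpace ℝ E] {f : ℝ → E} {α : ℝ}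
    {n : ℕ} (hf : ContDiffAt ℝ (n + 1) f α) :
    (fun x => f x - ∑ k ∈ Finset.range (n + 1),
        ((k.factorial : ℝ)⁻¹ * (x - α) ^ k) • iteratedDeriv k f α)
      =O[𝓝 α] fun x => (x - α) ^ (n + 1) := by
  obtain ⟨u, hu, hfu⟩ := hf.contDiffOn le_rfl (by simp)
  obtain ⟨ε, hε, hball⟩ := Metric.mem_nhds_iff.mp hu
  have hα : α ∈ Metric.ball α ε := Metric.mem_ball_self hε
  have hlittle := taylor_isLittleO (n := n + 1) (convex_ball α ε) hα
    (by exact_mod_cast hfu.mono hball)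
  rw [Metric.isOpen_ball.nhdsWithin_eq hα] at hlittle
  have hlast : (fun x => (((n + 1).factorial : ℝ)⁻¹ * (x - α) ^ (n + 1)) •
      iteratedDeriv (n + 1) f α) =O[𝓝 α] fun x => (x - α) ^ (n + 1) :=
    .of_bound (‖((n + 1).factorial : ℝ)⁻¹‖ * ‖iteratedDeriv (n + 1) f α‖) <| .of_forall fun x => by
      rw [norm_smul, norm_mul, mul_right_comm]
  refine (hlittle.isBigO.add hlast).congr_left fun x => ?_
  simp only [taylor_within_apply, Finset.sum_range_succ _ (n + 1),
    iteratedDerivWithin_of_isOpen Metric.isOpen_ball hα]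
  abel

lemma isBigO_newtonStep_sub {f : ℝ → ℝ} {α a c₂ c₃ : ℝ} (ha : a ≠ 0)
    (hf : (fun x => f x - a * ((x - α) + c₂ * (x - α) ^ 2 + c₃ * (x - α) ^ 3))
      =O[𝓝 α] fun x => (x - α) ^ 4)
    (hf' : (fun x => deriv f x - a * (1 + 2 * c₂ * (x - α) + 3 * c₃ * (x - α) ^ 2))
      =O[𝓝 α] fun x => (x - α) ^ 3) :
    (fun x => newtonStep f x - α - (c₂ * (x - α) ^ 2 + 2 * (c₃ - c₂ ^ 2) * (x - α) ^ 3))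
      =O[𝓝 α] fun x => (x - α) ^ 4 := by
  have hderiv : Tendsto (deriv f) (𝓝 α) (𝓝 a) := by
    have hrem := hf'.trans_tendsto (Continuous.tendsto' (by fun_prop) α 0 (by simp))
    have hmain : Tendsto (fun x => a * (1 + 2 * c₂ * (x - α) + 3 * c₃ * (x - α) ^ 2))
        (𝓝 α) (𝓝 a) := Continuous.tendsto' (by fun_prop) α a (by simp)
    simpa using hrem.add hmain
  -- With `e = x - α`, `P = e + c₂ e² + c₃ e³`, `D = 1 + 2 c₂ e + 3 c₃ e²` and `η` the claimed
  -- expansion, `(y - α - η) f' = a ((e - η) D - P) + (e - η) (f' - a D) - (f - a P)`;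
  -- the coefficients of `η` are those that make `(e - η) D - P` divisible by `e⁴`.
  have hcancel : (fun x => a * (-c₂ * (4 * (c₃ - c₂ ^ 2) + 3 * c₃)
      - 6 * c₃ * (c₃ - c₂ ^ 2) * (x - α)) * (x - α) ^ 4) =O[𝓝 α] fun x => (x - α) ^ 4 :=
    isBigO_mul_of_tendsto (Continuous.tendsto (by fun_prop) α) _
  have hrem' : (fun x => ((1 - c₂ * (x - α) - 2 * (c₃ - c₂ ^ 2) * (x - α) ^ 2) * (x - α)) *
      (deriv f x - a * (1 + 2 * c₂ * (x - α) + 3 * c₃ * (x - α) ^ 2)))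
      =O[𝓝 α] fun x => (x - α) ^ 4 :=
    ((isBigO_mul_of_tendsto (Continuous.tendsto (by fun_prop) α) _).mul hf').congr_right
      fun x => by ring
  have hprod := (hcancel.add hrem').sub hf
  refine ((isBigO_mul_of_tendsto (hderiv.inv₀ ha) _).trans hprod).congr' ?_ .rfl
  filter_upwards [hderiv.eventually_ne ha] with x hx
  rw [newtonStep, inv_mul_eq_iff_eq_mul₀ hx]
  field_simp
  ring

lemma isBigO_newtonStep_sub_of_contDiffAt {f : ℝ → ℝ} {α c₂ c₃ : ℝ} (hf : ContDiffAt ℝ 4 f α)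
    (hroot : f α = 0) (hsimple : deriv f α ≠ 0)
    (h₂ : iteratedDeriv 2 f α = 2 * deriv f α * c₂)
    (h₃ : iteratedDeriv 3 f α = 6 * deriv f α * c₃) :
    (fun x => newtonStep f x - α - (c₂ * (x - α) ^ 2 + 2 * (c₃ - c₂ ^ 2) * (x - α) ^ 3))
      =O[𝓝 α] fun x => (x - α) ^ 4 := by
  refine isBigO_newtonStep_sub hsimple
    ((isBigO_sub_taylor (n := 3) (hf.of_le (by norm_num))).congr_left fun x => ?_)
    ((isBigO_sub_taylor (n := 2) (hf.derivWithin (by norm_num))).congr_left fun x => ?_)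
  · simp only [Finset.sum_range_succ, Finset.sum_range_zero, Nat.factorial, iteratedDeriv_zero,
      iteratedDeriv_one, smul_eq_mul, hroot, h₂, h₃]
    push_cast
    ring
  · simp only [Finset.sum_range_succ, Finset.sum_range_zero, Nat.factorial, ← iteratedDeriv_succ',
      zero_add, Nat.reduceAdd, iteratedDeriv_one, smul_eq_mul, h₂, h₃]
    push_cast
    ring

lemma isTheta_sub_of_isLittleO {E : Type*} [NormedAddCommGroup E] {y : E → E} {α : E} {l : Filter E}
    (hy : (fun x => y x - α) =o[l] fun x => x - α) :
    (fun x => x - y x) =Θ[l] fun x => x - α := by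
  simpa only [Pi.sub_def, sub_sub_sub_cancel_right]
    using (IsEquivalent.refl.sub_isLittleO hy).isTheta

lemma isBigO_divDiff_sub_divDiff {f p y : ℝ → ℝ} {α : ℝ} {n : ℕ}
    (hfp : (fun x => f x - p x) =O[𝓝 α] fun x => (x - α) ^ (n + 1))
    (hy : (fun x => y x - α) =o[𝓝[≠] α] fun x => x - α) :
    (fun x => divDiff f x (y x) - divDiff p x (y x)) =O[𝓝[≠] α] fun x => (x - α) ^ n := by
  have hyα : Tendsto y (𝓝[≠] α) (𝓝 α) :=
    tendsto_sub_nhds_zero_iff.mp (hy.trans_tendsto (tendsto_sub_nhdsNE α))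
  have hnum : (fun x => (f x - p x) - (f (y x) - p (y x)))
      =O[𝓝[≠] α] fun x => (x - α) ^ (n + 1) :=
    (hfp.mono nhdsWithin_le_nhds).sub ((hfp.comp_tendsto hyα).trans (hy.isBigO.pow (n + 1)))
  refine (hnum.mul (isTheta_sub_of_isLittleO hy).inv.isBigO).congr' (.of_forall fun x => ?_) ?_
  · simp only [divDiff]
    ring
  · filter_upwards [self_mem_nhdsWithin] with x hx
    rw [pow_succ, mul_inv_cancel_right₀ (sub_ne_zero.mpr hx)]

lemma divDiff_quartic {α a c₂ c₃ c₄ u v : ℝ} (huv : u ≠ v) :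
    divDiff (fun x => a * ((x - α) + c₂ * (x - α) ^ 2 + c₃ * (x - α) ^ 3 + c₄ * (x - α) ^ 4)) u v =
      a * (1 + c₂ * ((u - α) + (v - α))
        + c₃ * ((u - α) ^ 2 + (u - α) * (v - α) + (v - α) ^ 2)
        + c₄ * ((u - α) ^ 3 + (u - α) ^ 2 * (v - α) + (u - α) * (v - α) ^ 2 + (v - α) ^ 3)) := by
  rw [divDiff, div_eq_iff (sub_ne_zero.mpr huv)]
  ring

lemma isBigO_sub_sq_of_quadratic_offset {y : ℝ → ℝ} {α A B : ℝ}
    (hy : (fun x => y x - α - (A * (x - α) ^ 2 + B * (x - α) ^ 3))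
      =O[𝓝[≠] α] fun x => (x - α) ^ 4) :
    (fun x => y x - α) =O[𝓝[≠] α] fun x => (x - α) ^ 2 := by
  have hpow : (fun x => (x - α) ^ 4) =O[𝓝[≠] α] fun x => (x - α) ^ 2 :=
    ((isLittleO_pow_pow (by norm_num)).comp_tendsto (tendsto_sub_nhdsNE α)).isBigO
  have hmain : (fun x => (A + B * (x - α)) * (x - α) ^ 2) =O[𝓝[≠] α] fun x => (x - α) ^ 2 :=
    isBigO_mul_of_tendsto (((tendsto_sub_nhdsNE α).const_mul B).const_add A) _
  refine ((hy.trans hpow).add hmain).congr_left fun x => ?_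
  ring

lemma isBigO_divDiff_quartic_sub_of_quadratic_offset {y : ℝ → ℝ} {α A B : ℝ} (a c₂ c₃ c₄ : ℝ)
    (hne : ∀ᶠ x in 𝓝[≠] α, x ≠ y x)
    (hy : (fun x => y x - α - (A * (x - α) ^ 2 + B * (x - α) ^ 3))
      =O[𝓝[≠] α] fun x => (x - α) ^ 4) :
    (fun x => divDiff (fun t =>
          a * ((t - α) + c₂ * (t - α) ^ 2 + c₃ * (t - α) ^ 3 + c₄ * (t - α) ^ 4)) x (y x) -
        a * (1 + c₂ * (x - α) + (c₃ + c₂ * A) * (x - α) ^ 2 +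
          (c₄ + c₃ * A + c₂ * B) * (x - α) ^ 3))
      =O[𝓝[≠] α] fun x => (x - α) ^ 4 := by
  have he := tendsto_sub_nhdsNE α
  have hη := isBigO_sub_sq_of_quadratic_offset hy
  have hη₀ : Tendsto (fun x => y x - α) (𝓝[≠] α) (𝓝 0) :=
    hη.trans_tendsto (by simpa using he.pow 2)
  -- With `e = x - α`, `η = y x - α` and `δ = η - A e² - B e³`, the error is `a` times
  -- `(c₂ + c₃ e) δ + (c₃ + c₄ (e + η)) η² + c₄ e² η + c₃ B e⁴`.
  have hremainder := (isBigO_mul_of_tendsto ((he.const_mul c₃).const_add c₂) _).trans hy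
  have hsq : (fun x => (c₃ + c₄ * ((x - α) + (y x - α))) * (y x - α) ^ 2)
      =O[𝓝[≠] α] fun x => (x - α) ^ 4 :=
    (isBigO_mul_of_tendsto (((he.add hη₀).const_mul c₄).const_add c₃) _).trans
      ((hη.pow 2).congr_right fun x => by ring)
  have hmixed : (fun x => (x - α) ^ 2 * (y x - α)) =O[𝓝[≠] α] fun x => (x - α) ^ 4 :=
    ((isBigO_refl _ _).mul hη).congr_right fun x => by ring
  have hfourth : (fun x => c₃ * B * (x - α) ^ 4) =O[𝓝[≠] α] fun x => (x - α) ^ 4 :=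
    isBigO_const_mul_self _ _ _
  refine ((((hremainder.add hsq).add (hmixed.const_mul_left c₄)).add hfourth).const_mul_left
    a).congr' ?_ .rfl
  filter_upwards [hne] with x hx
  rw [divDiff_quartic hx]
  ring

lemma isBigO_divDiff_sub_of_quadratic_offset {f y : ℝ → ℝ} {α a c₂ c₃ c₄ A B : ℝ}
    (hf : (fun x => f x -
        a * ((x - α) + c₂ * (x - α) ^ 2 + c₃ * (x - α) ^ 3 + c₄ * (x - α) ^ 4))
      =O[𝓝 α] fun x => (x - α) ^ 5)
    (hy : (fun x => y x - α - (A * (x - α) ^ 2 + B * (x - α) ^ 3))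
      =O[𝓝[≠] α] fun x => (x - α) ^ 4) :
    (fun x => divDiff f x (y x) - a * (1 + c₂ * (x - α) + (c₃ + c₂ * A) * (x - α) ^ 2 +
        (c₄ + c₃ * A + c₂ * B) * (x - α) ^ 3))
      =O[𝓝[≠] α] fun x => (x - α) ^ 4 := by
  have hlittle : (fun x => y x - α) =o[𝓝[≠] α] fun x => x - α :=
    (isBigO_sub_sq_of_quadratic_offset hy).trans_isLittleO
      ((isLittleO_pow_id one_lt_two).comp_tendsto (tendsto_sub_nhdsNE α))
  have hne : ∀ᶠ x in 𝓝[≠] α, x ≠ y x := by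
    filter_upwards [(isTheta_sub_of_isLittleO hlittle).eq_zero_iff, self_mem_nhdsWithin]
      with x hzero hx
    exact sub_ne_zero.mp (mt hzero.mp (sub_ne_zero.mpr hx))
  simpa only [sub_add_sub_cancel] using
    (isBigO_divDiff_sub_divDiff hf hlittle).add
      (isBigO_divDiff_quartic_sub_of_quadratic_offset a c₂ c₃ c₄ hne hy)

theorem divDiff_x_y_expansion_general (f : ℝ → ℝ) (α : ℝ)
    (hf : ContDiffAt ℝ 5 f α)
    (hroot : f α = 0) (hsimple : deriv f α ≠ 0)
    (c₂ c₃ c₄ : ℝ)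
    (hc₂ : c₂ = iteratedDeriv 2 f α / (2 * deriv f α))
    (hc₃ : c₃ = iteratedDeriv 3 f α / (6 * deriv f α))
    (hc₄ : c₄ = iteratedDeriv 4 f α / (24 * deriv f α)) :
    (fun x => divDiff f x (newtonStep f x) -
        deriv f α * (1 + c₂ * (x - α) + (c₂ ^ 2 + c₃) * (x - α) ^ 2 +
          (-2 * c₂ ^ 3 + 3 * c₃ * c₂ + c₄) * (x - α) ^ 3))
      =O[𝓝[≠] α] fun x => (x - α) ^ 4 := by
  have h₂ : iteratedDeriv 2 f α = 2 * deriv f α * c₂ := by rw [hc₂]; field_simp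
  have h₃ : iteratedDeriv 3 f α = 6 * deriv f α * c₃ := by rw [hc₃]; field_simp
  have h₄ : iteratedDeriv 4 f α = 24 * deriv f α * c₄ := by rw [hc₄]; field_simp
  have hquartic : (fun x => f x - deriv f α *
      ((x - α) + c₂ * (x - α) ^ 2 + c₃ * (x - α) ^ 3 + c₄ * (x - α) ^ 4))
      =O[𝓝 α] fun x => (x - α) ^ 5 := by
    refine (isBigO_sub_taylor (n := 4) (hf.of_le (by norm_num))).congr_left fun x => ?_
    simp only [Finset.sum_range_succ, Finset.sum_range_zero, Nat.factorial, iteratedDeriv_zero,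
      iteratedDeriv_one, smul_eq_mul, hroot, h₂, h₃, h₄]
    push_cast
    ring
  have hnewton :=
    isBigO_newtonStep_sub_of_contDiffAt (hf.of_le (by norm_num)) hroot hsimple h₂ h₃
  refine (isBigO_divDiff_sub_of_quadratic_offset hquartic
    (hnewton.mono nhdsWithin_le_nhds)).congr_left fun x => ?_
  ring

theorem divDiff_x_y_expansion (f : ℝ → ℝ) (α : ℝ)
    (hf : ∃ s ∈ 𝓝 α, ContDiffOn ℝ (⊤ : ℕ∞) f s)
    (hroot : f α = 0) (hsimple : deriv f α ≠ 0)
    (c₂ c₃ c₄ : ℝ)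
    (hc₂ : c₂ = iteratedDeriv 2 f α / (2 * deriv f α))
    (hc₃ : c₃ = iteratedDeriv 3 f α / (6 * deriv f α))
    (hc₄ : c₄ = iteratedDeriv 4 f α / (24 * deriv f α)) :
    (fun x => divDiff f x (newtonStep f x) -
        deriv f α * (1 + c₂ * (x - α) + (c₂ ^ 2 + c₃) * (x - α) ^ 2 +
          (-2 * c₂ ^ 3 + 3 * c₃ * c₂ + c₄) * (x - α) ^ 3))
      =O[𝓝[≠] α] fun x => (x - α) ^ 4 := by
  obtain ⟨s, hs, hfs⟩ := hf
  exact divDiff_x_y_expansion_general f α (contDiffAt_infty.mp (hfs.contDiffAt hs) 5)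
    hroot hsimple c₂ c₃ c₄ hc₂ hc₃ hc₄
end

section
/- Let f : ℝ → ℝ be C^∞ on a neighborhood of a point α with f(α) = 0 and f′(α) ≠ 0, and set c₂ = f″(α)/(2 f′(α)), c₃ = f‴(α)/(6 f′(α)), c₄ = f⁗(α)/(24 f′(α)). Define y(x) = x − f(x)/f′(x). Then, as x → α, the second-order divided difference with repeated node f[y(x), x, x] = ((f(y(x)) − f(x))/(y(x) − x) − f′(x))/(y(x) − x) satisfies f[y(x), x, x] = f′(α)·[c₂ + 2c₃(x−α) + (3c₄ + c₂c₃)(x−α)² + O((x−α)³)]. -/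
open Filter Topology Asymptotics

/-- The second-order divided difference with repeated node `v`:
`f[u,v,v] = (f[u,v] − f′(v))/(u − v)`. -/
noncomputable def divDiff2 (f : ℝ → ℝ) (u v : ℝ) : ℝ :=
  (divDiff f u v - deriv f v) / (u - v)

/-!
Write `t = x - α` and `s = u - α`. The operator `f ↦ f[u, x, x]` is linear and sends the `k`-th
power of `x ↦ x - α` to `∑ j t ^ (j - 1) s ^ (k - 1 - j)`, summed over `1 ≤ j < k`. As long as
`s = O(t)` and `t = O(u - x)`, this operator costs two orders on a Taylor remainder, so expanding
`f` at `α` to order four gives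
`f[u, x, x] = f'(α) (c₂ + c₃ (2t + s) + c₄ (3t² + 2ts + s²)) + O(t³)`.
For the Newton step, `s = c₂ t² + O(t³)`: only the terms `2c₃ t`, `c₃ s` and `3c₄ t²` contribute
beyond `c₂`.
-/

open scoped Nat

section TaylorRemainder

variable {E : Type*} [NormedAddCommGroup E] [NormedSpace ℝ E] {f : ℝ → E} {a : ℝ} {n : ℕ}

/-- The remainder `f x - ∑ k ≤ n, f⁽ᵏ⁾(a) (x - a)ᵏ / k!` of the Taylor expansion of order `n` of
`f` at `a`. Taking Mathlib's Taylor polynomial on `Set.univ` makes its coefficients the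
unrestricted derivatives of `f`. -/
noncomputable def taylorRemainder (f : ℝ → E) (n : ℕ) (a x : ℝ) : E :=
  f x - taylorWithinEval f n Set.univ a x

theorem taylorRemainder_eq_sub_sum (f : ℝ → E) (n : ℕ) (a x : ℝ) :
    taylorRemainder f n a x =
      f x - ∑ k ∈ Finset.range (n + 1), ((k ! : ℝ)⁻¹ * (x - a) ^ k) • iteratedDeriv k f a := by
  simp only [taylorRemainder, taylor_within_apply, iteratedDerivWithin_univ]

theorem taylorRemainder_zero (f : ℝ → E) (a x : ℝ) : taylorRemainder f 0 a x = f x - f a := by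
  rw [taylorRemainder, taylor_within_zero_eval]

theorem taylorRemainder_succ (f : ℝ → E) (n : ℕ) (a x : ℝ) :
    taylorRemainder f (n + 1) a x = taylorRemainder f n a x -
      (((n + 1)! : ℝ)⁻¹ * (x - a) ^ (n + 1)) • iteratedDeriv (n + 1) f a := by
  rw [taylorRemainder_eq_sub_sum, taylorRemainder_eq_sub_sum, Finset.sum_range_succ _ (n + 1),
    sub_add_eq_sub_sub]

theorem taylorRemainder_isLittleO (hf : ContDiffAt ℝ n f a) :
    taylorRemainder f n a =o[𝓝 a] fun x => (x - a) ^ n := by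
  obtain ⟨s, hs, hfs⟩ := hf.contDiffOn le_rfl (by simp)
  obtain ⟨ε, hε, hball⟩ := Metric.mem_nhds_iff.1 hs
  have ha : a ∈ Metric.ball a ε := Metric.mem_ball_self hε
  have h := taylor_isLittleO (convex_ball a ε) ha (hfs.mono hball)
  rw [Metric.isOpen_ball.nhdsWithin_eq ha] at h
  refine h.congr_left fun x => ?_
  simp only [taylorRemainder_eq_sub_sum, taylor_within_apply,
    iteratedDerivWithin_of_isOpen Metric.isOpen_ball ha]

theorem taylorRemainder_isBigO (hf : ContDiffAt ℝ (n + 1) f a) :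
    taylorRemainder f n a =O[𝓝 a] fun x => (x - a) ^ (n + 1) := by
  have hnext : (fun x => (((n + 1)! : ℝ)⁻¹ * (x - a) ^ (n + 1)) • iteratedDeriv (n + 1) f a)
      =O[𝓝 a] fun x => (x - a) ^ (n + 1) :=
    .of_bound ‖((n + 1)! : ℝ)⁻¹ • iteratedDeriv (n + 1) f a‖ <| .of_forall fun x => by
      rw [mul_comm, mul_smul, norm_smul, mul_comm]
  refine ((taylorRemainder_isLittleO (n := n + 1) (mod_cast hf)).isBigO.add hnext).congr_left
    fun x => ?_
  rw [taylorRemainder_succ, sub_add_cancel]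

theorem eventually_differentiableAt_of_contDiffAt (hf : ContDiffAt ℝ 1 f a) :
    ∀ᶠ x in 𝓝 a, DifferentiableAt ℝ f x :=
  (hf.eventually (by simp)).mono fun _ hx => hx.differentiableAt one_ne_zero

theorem deriv_taylorRemainder_succ {x : ℝ} (hf : DifferentiableAt ℝ f x) :
    deriv (taylorRemainder f (n + 1) a) x = taylorRemainder (deriv f) n a x := by
  simpa only [derivWithin_univ] using!
    (hf.hasDerivAt.sub (hasDerivAt_taylorWithinEval_succ (s := Set.univ) (x₀ := a) f n)).deriv

theorem deriv_taylorRemainder_succ_isBigO (hf : ContDiffAt ℝ (n + 2) f a) :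
    deriv (taylorRemainder f (n + 1) a) =O[𝓝 a] fun x => (x - a) ^ (n + 1) := by
  have hdiff : ∀ᶠ x in 𝓝 a, DifferentiableAt ℝ f x :=
    eventually_differentiableAt_of_contDiffAt (hf.of_le (by norm_cast; lia))
  have hf' : ContDiffAt ℝ (n + 1) (deriv f) a := hf.derivWithin (by norm_cast)
  refine (taylorRemainder_isBigO hf').congr' ?_ .rfl
  filter_upwards [hdiff] with x hx using (deriv_taylorRemainder_succ hx).symm

end TaylorRemainder

section DividedDifference

variable {f g : ℝ → ℝ} {u v : ℝ}

theorem divDiff2_eq_div_sq (h : u ≠ v) :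
    divDiff2 f u v = (f u - f v - deriv f v * (u - v)) / (u - v) ^ 2 := by
  have : u - v ≠ 0 := sub_ne_zero.2 h
  rw [divDiff2, divDiff]
  field_simp

theorem divDiff2_sub (hf : DifferentiableAt ℝ f v) (hg : DifferentiableAt ℝ g v) :
    divDiff2 (f - g) u v = divDiff2 f u v - divDiff2 g u v := by
  simp only [divDiff2, divDiff, deriv_sub hf hg, Pi.sub_apply]
  ring

theorem divDiff2_const_mul (c : ℝ) (f : ℝ → ℝ) (u v : ℝ) :
    divDiff2 (fun x => c * f x) u v = c * divDiff2 f u v := by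
  simp only [divDiff2, divDiff, deriv_const_mul_field]
  ring

theorem divDiff2_sum {ι : Type*} {s : Finset ι} {p : ι → ℝ → ℝ}
    (hp : ∀ i ∈ s, DifferentiableAt ℝ (p i) v) :
    divDiff2 (fun x => ∑ i ∈ s, p i x) u v = ∑ i ∈ s, divDiff2 (p i) u v := by
  simp only [divDiff2, divDiff, deriv_fun_sum hp, ← Finset.sum_sub_distrib, Finset.sum_div]

theorem divDiff2_sub_pow (h : u ≠ v) (a : ℝ) (n : ℕ) :
    divDiff2 (fun x => (x - a) ^ n) u v =
      ∑ j ∈ Finset.range n, j * (v - a) ^ (j - 1) * (u - a) ^ (n - 1 - j) := by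
  have : u - v ≠ 0 := sub_ne_zero.2 h
  have hderiv (m : ℕ) : deriv (fun x => (x - a) ^ m) v = m * (v - a) ^ (m - 1) := by
    simp
  induction n with
  | zero => simp [divDiff2, divDiff]
  | succ n ih =>
    have hrec : divDiff2 (fun x => (x - a) ^ (n + 1)) u v =
        (u - a) * divDiff2 (fun x => (x - a) ^ n) u v + n * (v - a) ^ (n - 1) := by
      rw [divDiff2_eq_div_sq h, divDiff2_eq_div_sq h, hderiv, hderiv]
      field_simp
      cases n <;> push_cast [Nat.add_sub_cancel] <;> ring
    rw [hrec, ih, Finset.sum_range_succ, Finset.mul_sum]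
    congr 1
    · refine Finset.sum_congr rfl fun j hj => ?_
      rw [show n + 1 - 1 - j = n - 1 - j + 1 by have := Finset.mem_range.1 hj; lia]
      ring
    · simp

theorem divDiff2_taylorRemainder (hf : DifferentiableAt ℝ f v) (h : u ≠ v) (n : ℕ) (a : ℝ) :
    divDiff2 (taylorRemainder f n a) u v = divDiff2 f u v -
      ∑ k ∈ Finset.range (n + 1), iteratedDeriv k f a / k ! *
        ∑ j ∈ Finset.range k, j * (v - a) ^ (j - 1) * (u - a) ^ (k - 1 - j) := by
  have hrem : taylorRemainder f n a = f - fun x => ∑ k ∈ Finset.range (n + 1),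
      iteratedDeriv k f a / k ! * (x - a) ^ k := by
    ext x
    rw [taylorRemainder_eq_sub_sum, Pi.sub_apply]
    congr 1
    exact Finset.sum_congr rfl fun k _ => by rw [smul_eq_mul]; ring
  rw [hrem, divDiff2_sub hf (by fun_prop), divDiff2_sum fun k _ => by fun_prop]
  simp only [divDiff2_const_mul, divDiff2_sub_pow h]

end DividedDifference

section Asymptotics

variable {ι : Type*} {l : Filter ι} {u v : ι → ℝ} {f R : ℝ → ℝ} {a : ℝ} {n : ℕ}

theorem eventually_ne_of_sub_isBigO (hv : ∀ᶠ i in l, v i ≠ a)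
    (huv : (fun i => v i - a) =O[l] fun i => u i - v i) : ∀ᶠ i in l, u i ≠ v i := by
  filter_upwards [huv.eq_zero_imp, hv] with i hzero hi huvi
  exact hi (sub_eq_zero.1 (hzero (sub_eq_zero.2 huvi)))

theorem divDiff2_isBigO (hR : R =O[𝓝 a] fun x => (x - a) ^ (n + 2))
    (hR' : deriv R =O[𝓝 a] fun x => (x - a) ^ (n + 1)) (hv : Tendsto v l (𝓝[≠] a))
    (hu : (fun i => u i - a) =O[l] fun i => v i - a)
    (huv : (fun i => v i - a) =O[l] fun i => u i - v i) :
    (fun i => divDiff2 R (u i) (v i)) =O[l] fun i => (v i - a) ^ n := by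
  have hva : Tendsto v l (𝓝 a) := hv.mono_right nhdsWithin_le_nhds
  have hne : ∀ᶠ i in l, v i ≠ a := hv.eventually_mem self_mem_nhdsWithin
  have hv0 : ∀ᶠ i in l, v i - a ≠ 0 := hne.mono fun i hi => sub_ne_zero.2 hi
  have hua : Tendsto u l (𝓝 a) :=
    tendsto_sub_nhds_zero_iff.1 (hu.trans_tendsto (tendsto_sub_nhds_zero_iff.2 hva))
  have hRu : (fun i => R (u i)) =O[l] fun i => (v i - a) ^ (n + 2) :=
    (hR.comp_tendsto hua).trans (hu.pow (n + 2))
  have hRv : (fun i => R (v i)) =O[l] fun i => (v i - a) ^ (n + 2) := hR.comp_tendsto hva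
  have huv' : (fun i => u i - v i) =O[l] fun i => v i - a :=
    (hu.sub (isBigO_refl _ l)).congr_left fun i => sub_sub_sub_cancel_right ..
  have hRuv : (fun i => deriv R (v i) * (u i - v i)) =O[l] fun i => (v i - a) ^ (n + 2) :=
    ((hR'.comp_tendsto hva).mul huv').congr_right fun i => (pow_succ _ _).symm
  have hinv : (fun i => ((u i - v i) ^ 2)⁻¹) =O[l] fun i => ((v i - a) ^ 2)⁻¹ :=
    (huv.pow 2).inv_rev (hv0.mono fun i hi h => absurd h (pow_ne_zero 2 hi))
  refine (((hRu.sub hRv).sub hRuv).mul hinv).congr' ?_ ?_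
  · filter_upwards [eventually_ne_of_sub_isBigO hne huv] with i hi
    rw [divDiff2_eq_div_sq hi, div_eq_mul_inv]
  · filter_upwards [hv0] with i hi
    rw [pow_add, mul_inv_cancel_right₀ (pow_ne_zero 2 hi)]

theorem divDiff2_sub_sum_isBigO (hf : ContDiffAt ℝ (n + 2) f a) (hv : Tendsto v l (𝓝[≠] a))
    (hu : (fun i => u i - a) =O[l] fun i => v i - a)
    (huv : (fun i => v i - a) =O[l] fun i => u i - v i) :
    (fun i => divDiff2 f (u i) (v i) -
        ∑ k ∈ Finset.range (n + 2), iteratedDeriv k f a / k ! *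
          ∑ j ∈ Finset.range k, j * (v i - a) ^ (j - 1) * (u i - a) ^ (k - 1 - j))
      =O[l] fun i => (v i - a) ^ n := by
  have hR : taylorRemainder f (n + 1) a =O[𝓝 a] fun x => (x - a) ^ (n + 2) :=
    taylorRemainder_isBigO (by exact_mod_cast hf)
  have hdiff : ∀ᶠ x in 𝓝 a, DifferentiableAt ℝ f x :=
    eventually_differentiableAt_of_contDiffAt (hf.of_le (by norm_cast; lia))
  refine (divDiff2_isBigO hR (deriv_taylorRemainder_succ_isBigO hf) hv hu huv).congr' ?_ .rfl
  filter_upwards [eventually_ne_of_sub_isBigO (hv.eventually_mem self_mem_nhdsWithin) huv,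
    (hv.mono_right nhdsWithin_le_nhds).eventually hdiff] with i hi hfi
  exact divDiff2_taylorRemainder hfi hi (n + 1) a

theorem divDiff2_sub_quadratic_isBigO (hf : ContDiffAt ℝ 5 f a) (hv : Tendsto v l (𝓝[≠] a))
    (hu : (fun i => u i - a) =O[l] fun i => v i - a)
    (huv : (fun i => v i - a) =O[l] fun i => u i - v i) :
    (fun i => divDiff2 f (u i) (v i) -
        (iteratedDeriv 2 f a / 2 + iteratedDeriv 3 f a / 6 * (2 * (v i - a) + (u i - a)) +
          iteratedDeriv 4 f a / 24 *
            (3 * (v i - a) ^ 2 + 2 * (v i - a) * (u i - a) + (u i - a) ^ 2)))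
      =O[l] fun i => (v i - a) ^ 3 := by
  refine (divDiff2_sub_sum_isBigO (n := 3) (by exact_mod_cast hf) hv hu huv).congr_left fun i => ?_
  norm_num [Finset.sum_range_succ, Nat.factorial]
  ring

end Asymptotics

section Newton

variable {f : ℝ → ℝ} {a : ℝ}

-- The hypothesis says that `p` solves the linearised equation `f x + f'(x) (p x - x) = 0` up to
-- an error `O(g)`.
theorem newtonStep_sub_isBigO (hf' : ContinuousAt (deriv f) a) (hsimple : deriv f a ≠ 0)
    {p g : ℝ → ℝ} (hp : (fun x => deriv f x * (x - p x) - f x) =O[𝓝 a] g) :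
    (fun x => newtonStep f x - p x) =O[𝓝 a] g := by
  have hinv : (fun x => (deriv f x)⁻¹) =O[𝓝 a] fun _ => (1 : ℝ) :=
    (hf'.inv₀ hsimple).isBigO_one ℝ
  refine (hinv.mul hp).congr' ?_ (.of_forall fun x => one_mul (g x))
  filter_upwards [hf'.eventually_ne hsimple] with x hx
  rw [newtonStep]
  field_simp
  ring

theorem newtonStep_sub_root_isBigO (hf : ContDiffAt ℝ 2 f a) (hroot : f a = 0)
    (hsimple : deriv f a ≠ 0) :
    (fun x => newtonStep f x - a) =O[𝓝 a] fun x => (x - a) ^ 2 := by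
  have hf' : ContDiffAt ℝ 1 (deriv f) a := hf.derivWithin (by norm_num)
  have hR : taylorRemainder f 1 a =O[𝓝 a] fun x => (x - a) ^ 2 :=
    taylorRemainder_isBigO (by exact_mod_cast hf)
  have hR' : taylorRemainder (deriv f) 0 a =O[𝓝 a] fun x => (x - a) ^ 1 :=
    taylorRemainder_isBigO (by exact_mod_cast hf')
  have hR't : (fun x => taylorRemainder (deriv f) 0 a x * (x - a)) =O[𝓝 a] fun x => (x - a) ^ 2 :=
    (hR'.mul (isBigO_refl _ _)).congr_right fun x => by ring
  refine newtonStep_sub_isBigO hf'.continuousAt hsimple ((hR't.sub hR).congr_left fun x => ?_)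
  simp only [taylorRemainder_succ f 0, taylorRemainder_zero, hroot, zero_add, Nat.factorial_one,
    Nat.cast_one, iteratedDeriv_one, smul_eq_mul]
  ring

theorem newtonStep_sub_root_isLittleO (hf : ContDiffAt ℝ 2 f a) (hroot : f a = 0)
    (hsimple : deriv f a ≠ 0) :
    (fun x => newtonStep f x - a) =o[𝓝 a] fun x => x - a :=
  (newtonStep_sub_root_isBigO hf hroot hsimple).trans_isLittleO <|
    (isLittleO_pow_sub_sub a one_lt_two).congr_left fun x => by rw [Real.norm_eq_abs, sq_abs]

theorem newtonStep_sub_quadratic_isBigO (hf : ContDiffAt ℝ 3 f a) (hroot : f a = 0)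
    (hsimple : deriv f a ≠ 0) :
    (fun x => newtonStep f x - (a + iteratedDeriv 2 f a / (2 * deriv f a) * (x - a) ^ 2))
      =O[𝓝 a] fun x => (x - a) ^ 3 := by
  set c := iteratedDeriv 2 f a / (2 * deriv f a) with hc
  have hf' : ContDiffAt ℝ 2 (deriv f) a := hf.derivWithin (by norm_num)
  have hR : taylorRemainder f 2 a =O[𝓝 a] fun x => (x - a) ^ 3 :=
    taylorRemainder_isBigO (by exact_mod_cast hf)
  have hR₁ : taylorRemainder (deriv f) 1 a =O[𝓝 a] fun x => (x - a) ^ 2 :=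
    taylorRemainder_isBigO (by exact_mod_cast hf')
  have hR₀ : taylorRemainder (deriv f) 0 a =O[𝓝 a] fun x => (x - a) ^ 1 :=
    taylorRemainder_isBigO (by exact_mod_cast hf'.of_le one_le_two)
  have hR₁t : (fun x => taylorRemainder (deriv f) 1 a x * (x - a)) =O[𝓝 a] fun x => (x - a) ^ 3 :=
    (hR₁.mul (isBigO_refl _ _)).congr_right fun x => by ring
  have hR₀t : (fun x => taylorRemainder (deriv f) 0 a x * (c * (x - a) ^ 2))
      =O[𝓝 a] fun x => (x - a) ^ 3 :=
    (hR₀.mul (isBigO_const_mul_self c _ _)).congr_right fun x => by ring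
  refine newtonStep_sub_isBigO hf'.continuousAt hsimple
    (((hR₁t.sub hR₀t).sub hR).congr_left fun x => ?_)
  have h2 : iteratedDeriv 2 f a = 2 * c * deriv f a := by rw [hc]; field_simp
  have h2' : deriv (deriv f) a = 2 * c * deriv f a := by
    rw [← h2, iteratedDeriv_succ, iteratedDeriv_one]
  simp only [taylorRemainder_succ _ 0, taylorRemainder_succ f 1, taylorRemainder_zero, hroot,
    zero_add, Nat.reduceAdd, Nat.factorial_one, Nat.factorial_two, Nat.cast_one, Nat.cast_ofNat,
    iteratedDeriv_one, h2, h2', smul_eq_mul]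
  ring

end Newton

theorem divDiff2_y_x_x_expansion_general (f : ℝ → ℝ) (α : ℝ) (hf : ContDiffAt ℝ 5 f α)
    (hroot : f α = 0) (hsimple : deriv f α ≠ 0)
    (c₂ c₃ c₄ : ℝ)
    (hc₂ : c₂ = iteratedDeriv 2 f α / (2 * deriv f α))
    (hc₃ : c₃ = iteratedDeriv 3 f α / (6 * deriv f α))
    (hc₄ : c₄ = iteratedDeriv 4 f α / (24 * deriv f α)) :
    (fun x => divDiff2 f (newtonStep f x) x -
        deriv f α * (c₂ + 2 * c₃ * (x - α) + (3 * c₄ + c₂ * c₃) * (x - α) ^ 2))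
      =O[𝓝[≠] α] fun x => (x - α) ^ 3 := by
  have hf₂ : ContDiffAt ℝ 2 f α := hf.of_le (by norm_num)
  have hle : 𝓝[≠] α ≤ 𝓝 α := nhdsWithin_le_nhds
  have hsq := (newtonStep_sub_root_isBigO hf₂ hroot hsimple).mono hle
  have hlittle := (newtonStep_sub_root_isLittleO hf₂ hroot hsimple).mono hle
  have hquad := (newtonStep_sub_quadratic_isBigO (hf.of_le (by norm_num)) hroot hsimple).mono hle
  rw [← hc₂] at hquad
  have hcross : (fun x => (2 * (x - α) + (newtonStep f x - α)) * (newtonStep f x - α))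
      =O[𝓝[≠] α] fun x => (x - α) ^ 3 :=
    (((isBigO_const_mul_self 2 _ _).add hlittle.isBigO).mul hsq).congr_right fun x => by ring
  have hexp := divDiff2_sub_quadratic_isBigO hf tendsto_id hlittle.isBigO
    (hlittle.right_isBigO_sub.neg_right.congr_right fun x => by simp)
  have h2 : iteratedDeriv 2 f α = 2 * deriv f α * c₂ := by rw [hc₂]; field_simp
  have h3 : iteratedDeriv 3 f α = 6 * deriv f α * c₃ := by rw [hc₃]; field_simp
  have h4 : iteratedDeriv 4 f α = 24 * deriv f α * c₄ := by rw [hc₄]; field_simp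
  refine ((hexp.add (hquad.const_mul_left (deriv f α * c₃))).add
    (hcross.const_mul_left (deriv f α * c₄))).congr_left fun x => ?_
  simp only [id_eq, h2, h3, h4]
  ring

theorem divDiff2_y_x_x_expansion (f : ℝ → ℝ) (α : ℝ)
    (hf : ∃ s ∈ 𝓝 α, ContDiffOn ℝ (⊤ : ℕ∞) f s)
    (hroot : f α = 0) (hsimple : deriv f α ≠ 0)
    (c₂ c₃ c₄ : ℝ)
    (hc₂ : c₂ = iteratedDeriv 2 f α / (2 * deriv f α))
    (hc₃ : c₃ = iteratedDeriv 3 f α / (6 * deriv f α))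
    (hc₄ : c₄ = iteratedDeriv 4 f α / (24 * deriv f α)) :
    (fun x => divDiff2 f (newtonStep f x) x -
        deriv f α * (c₂ + 2 * c₃ * (x - α) + (3 * c₄ + c₂ * c₃) * (x - α) ^ 2))
      =O[𝓝[≠] α] fun x => (x - α) ^ 3 := by
  obtain ⟨s, hs, hfs⟩ := hf
  exact divDiff2_y_x_x_expansion_general f α ((contDiffOn_infty.1 hfs 5).contDiffAt hs)
    hroot hsimple c₂ c₃ c₄ hc₂ hc₃ hc₄
end
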